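/- arXiv:2208.10554 — 4 statements merged into one kernel-verified Lean document; each statement's English description precedes it below -/
import Mathlib

section
/- Let λ = (λ_1, …, λ_q) be a partition of length q (so λ_1 ≥ λ_2 ≥ … ≥ λ_q ≥ 1), and set ℓ_i = λ_i + q − i for 1 ≤ i ≤ q. Then the number f^λ of standard Young tableaux of shape λ is given by the Frobenius formula f^λ = ( |λ|! / ∏_{i=1}^q ℓ_i! ) · ∏_{1 ≤ i < j ≤ q} (ℓ_i − ℓ_j), where |λ| = ∑_{i=1}^q λ_i. -/
/-- The cells of the Young diagram of the partition `l = (l 0, l 1, …, l (q-1))`: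
the pair `⟨i, j⟩` is a cell iff `j < l i` (row `i`, column `j`, zero-indexed). -/
def sytShape (q : ℕ) (l : Fin q → ℕ) : Finset (Σ _ : Fin q, ℕ) :=
  Finset.univ.sigma fun i => Finset.range (l i)

/-- `T` is a standard Young tableau of shape `l`: it is a bijective labelling of the
cells of the diagram by `1, …, |λ|` (here realized as `Fin (∑ i, l i)`) whose entries
strictly increase along each row and strictly increase down each column. -/
def IsSYT {q : ℕ} (l : Fin q → ℕ)
    (T : {x // x ∈ sytShape q l} ≃ Fin (∑ i, l i)) : Prop :=
  (∀ x y : {x // x ∈ sytShape q l},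
      (x : Σ _ : Fin q, ℕ).1 = (y : Σ _ : Fin q, ℕ).1 →
      (x : Σ _ : Fin q, ℕ).2 < (y : Σ _ : Fin q, ℕ).2 → T x < T y) ∧
  (∀ x y : {x // x ∈ sytShape q l},
      (x : Σ _ : Fin q, ℕ).1 < (y : Σ _ : Fin q, ℕ).1 →
      (x : Σ _ : Fin q, ℕ).2 = (y : Σ _ : Fin q, ℕ).2 → T x < T y)

/-- `f^λ`, the number of standard Young tableaux of shape `λ = l`. -/
noncomputable def sytCount (q : ℕ) (l : Fin q → ℕ) : ℕ :=
  Nat.card {T : {x // x ∈ sytShape q l} ≃ Fin (∑ i, l i) // IsSYT l T}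

/-- Vandermonde product. -/
noncomputable def frVdm {q : ℕ} (x : Fin q → ℚ) : ℚ :=
  ∏ i : Fin q, ∏ j ∈ Finset.univ.filter (fun j : Fin q => i < j), (x i - x j)

/-- Sign. -/
noncomputable def frSgn (q : ℕ) : ℚ :=
  ∏ i : Fin q, ∏ _j ∈ Finset.univ.filter (fun j : Fin q => i < j), (-1 : ℚ)

theorem frVdm_eq {q : ℕ} (x : Fin q → ℚ) :
    frVdm x = frSgn q * (Matrix.of fun k i : Fin q => (descPochhammer ℚ k).eval (x i)).det := by
  have h := Matrix.det_eval_matrixOfPolynomials_eq_det_vandermonde x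
    (fun i => descPochhammer ℚ i) (fun i => descPochhammer_natDegree ℚ i)
    (fun i => monic_descPochhammer ℚ i)
  rw [← Matrix.det_transpose] at h
  have e : (Matrix.of fun k i : Fin q => (descPochhammer ℚ k).eval (x i)).det
      = (Matrix.vandermonde x).det := by
    rw [← Matrix.det_transpose (Matrix.vandermonde x), h, ← Matrix.det_transpose]; rfl
  rw [e, Matrix.det_vandermonde, frVdm, frSgn, ← Finset.prod_mul_distrib]
  refine Finset.prod_congr rfl fun i _ => ?_
  have : Finset.Ioi i = Finset.univ.filter (fun j : Fin q => i < j) := by ext; simp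
  rw [this, ← Finset.prod_mul_distrib]
  exact Finset.prod_congr rfl fun j _ => by ring

theorem frVdm_sum {q : ℕ} (x : Fin q → ℚ) :
    ∑ i, x i * frVdm (Function.update x i (x i - 1)) =
      (∑ i, x i - ∑ i : Fin q, ((i : ℕ) : ℚ)) * frVdm x := by
  simp only [frVdm_eq, Matrix.det_apply', Finset.mul_sum]
  rw [Finset.sum_comm]
  refine Finset.sum_congr rfl fun σ _ => ?_
  have hs : ∑ i : Fin q, ((i : ℕ) : ℚ) = ∑ i : Fin q, ((σ i : ℕ) : ℚ) :=
    (Equiv.sum_comp σ (fun i : Fin q => ((i : ℕ) : ℚ))).symm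
  rw [hs, ← Finset.sum_sub_distrib, Finset.sum_mul]
  refine Finset.sum_congr rfl fun i _ => ?_
  simp only [Matrix.of_apply]
  rw [← Finset.mul_prod_erase _ _ (Finset.mem_univ i),
    ← Finset.mul_prod_erase _ (fun j => Polynomial.eval (x j) _) (Finset.mem_univ i)]
  have h1 : ∏ j ∈ Finset.univ.erase i, Polynomial.eval (Function.update x i (x i - 1) j)
      (descPochhammer ℚ (σ j)) = ∏ j ∈ Finset.univ.erase i, Polynomial.eval (x j)
      (descPochhammer ℚ (σ j)) := by
    refine Finset.prod_congr rfl fun j hj => ?_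
    rw [Function.update_of_ne (Finset.ne_of_mem_erase hj)]
  have h2 : x i * Polynomial.eval (x i - 1) (descPochhammer ℚ (σ i)) =
      (x i - (σ i : ℕ)) * Polynomial.eval (x i) (descPochhammer ℚ (σ i)) := by
    have := descPochhammer_succ_eval (σ i : ℕ) (x i)
    rw [descPochhammer_succ_left] at this
    simp at this
    rw [this]; ring
  rw [h1, Function.update_self]
  linear_combination (frSgn q * ((Equiv.Perm.sign σ : ℤ) : ℚ) *
    ∏ j ∈ Finset.univ.erase i, Polynomial.eval (x j) (descPochhammer ℚ (σ j))) * h2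

theorem frVdm_zero {q : ℕ} (x : Fin q → ℚ) (i j : Fin q) (hij : i < j) (h : x i = x j) :
    frVdm x = 0 := by
  refine Finset.prod_eq_zero (Finset.mem_univ i) ?_
  exact Finset.prod_eq_zero (i := j) (by simpa using hij) (by simp [h])

theorem frVdm_base (q : ℕ) :
    frVdm (fun i : Fin q => ((q - 1 - (i : ℕ) : ℕ) : ℚ)) =
      ∏ i : Fin q, ((q - 1 - (i : ℕ)).factorial : ℚ) := by
  refine Finset.prod_congr rfl fun i _ => ?_
  rw [← Finset.prod_range_add_one_eq_factorial]
  push_cast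
  symm
  refine Finset.prod_bij' (fun k hk => ⟨i + k + 1, by have := Finset.mem_range.1 hk; omega⟩)
    (fun j _ => j - i - 1) ?_ ?_ ?_ ?_ ?_
  · intro k hk
    simp only [Finset.mem_filter, Finset.mem_univ, true_and]
    exact Fin.mk_lt_mk.2 (by omega)
  · intro j hj
    have := Fin.lt_def.1 (Finset.mem_filter.1 hj).2
    have := j.2
    exact Finset.mem_range.2 (by omega)
  · intro k hk; simp; omega
  · intro j hj
    have := Fin.lt_def.1 (Finset.mem_filter.1 hj).2
    ext; simp only; omega
  · intro k hk
    have := Finset.mem_range.1 hk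
    simp only
    rw [show q - 1 - (i : ℕ) = (q - 1 - (i + k + 1)) + (k + 1) by omega]
    push_cast; ring

/-- Shifted part. -/
def frL {q : ℕ} (l : Fin q → ℕ) (i : Fin q) : ℕ := l i + (q - 1 - (i : ℕ))

theorem frL_sum {q : ℕ} (l : Fin q → ℕ) :
    ∑ i, (frL l i : ℚ) - ∑ i : Fin q, ((i : ℕ) : ℚ) = ((∑ i, l i : ℕ) : ℚ) := by
  have : ∑ i : Fin q, ((i : ℕ) : ℚ) = ∑ i : Fin q, ((q - 1 - (i : ℕ) : ℕ) : ℚ) := by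
    rw [← Equiv.sum_comp Fin.revPerm]
    refine Finset.sum_congr rfl fun i _ => ?_
    rw [Fin.revPerm_apply, Fin.val_rev]; congr 1; omega
  rw [this]; simp [frL, Finset.sum_add_distrib]

/-- Removable corner. -/
def frGood {q : ℕ} (l : Fin q → ℕ) (i : Fin q) : Prop := 0 < l i ∧ ∀ j, i < j → l j < l i

theorem frNotGood {q : ℕ} (l : Fin q → ℕ) (hl : ∀ i j : Fin q, i ≤ j → l j ≤ l i) (i : Fin q)
    (h : ¬ frGood l i) :
    (frL l i : ℚ) * frVdm (Function.update (fun j => (frL l j : ℚ)) i (frL l i - 1)) = 0 := by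
  have hi := i.2
  have key : ∀ j, i < j → l j = l i →
    (frL l i : ℚ) * frVdm (Function.update (fun j => (frL l j : ℚ)) i (frL l i - 1)) = 0 := by
    intro j hij hj
    have hij' := Fin.lt_def.1 hij
    have hj2 := j.2
    let k : Fin q := ⟨i + 1, by omega⟩
    have hik : i < k := by simp [Fin.lt_def, k]
    have h1 : l k ≤ l i := hl _ _ hik.le
    have h2 : l j ≤ l k := hl _ _ (by simp [Fin.le_def, k]; omega)
    rw [frVdm_zero _ i k hik, mul_zero]
    rw [Function.update_self, Function.update_of_ne hik.ne']
    have : frL l i = frL l k + 1 := by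
      have : (k : ℕ) = i + 1 := rfl
      simp only [frL]; omega
    rw [this]; push_cast; ring
  rw [frGood, not_and_or] at h
  rcases h with h | h
  · by_cases hi' : (i : ℕ) + 1 < q
    · have : i < (⟨i + 1, hi'⟩ : Fin q) := by simp [Fin.lt_def]
      refine key ⟨i + 1, hi'⟩ this ?_
      have := hl _ _ this.le
      omega
    · have : frL l i = 0 := by simp [frL]; omega
      simp [this]
  · push Not at h
    obtain ⟨j, hj, hj'⟩ := h
    exact key j hj (le_antisymm (hl _ _ hj.le) hj')

/-- Remove a box. -/
def frDec {q : ℕ} (l : Fin q → ℕ) (i : Fin q) : Fin q → ℕ := Function.update l i (l i - 1)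

theorem frDec_sum {q : ℕ} (l : Fin q → ℕ) (i : Fin q) (h : 0 < l i) (n : ℕ)
    (hn : ∑ i, l i = n + 1) : ∑ j, frDec l i j = n := by
  have := Finset.sum_update_of_mem (Finset.mem_univ i) l (l i - 1)
  rw [frDec, this]
  rw [← Finset.add_sum_erase _ _ (Finset.mem_univ i)] at hn
  rw [← Finset.erase_eq]
  omega

theorem frDec_mono {q : ℕ} (l : Fin q → ℕ) (hl : ∀ i j : Fin q, i ≤ j → l j ≤ l i) (i : Fin q)
    (h : frGood l i) : ∀ a b : Fin q, a ≤ b → frDec l i b ≤ frDec l i a := by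
  intro a b hab
  have h1 := hl a b hab
  have h2 := h.2 b
  simp only [frDec, Function.update_apply]
  split_ifs with hb ha ha
  · rfl
  · subst hb; omega
  · subst ha
    have := h2 (lt_of_le_of_ne hab (Ne.symm hb))
    omega
  · exact h1

theorem frDec_L {q : ℕ} (l : Fin q → ℕ) (i : Fin q) (h : 0 < l i) :
    frL (frDec l i) = Function.update (frL l) i (frL l i - 1) := by
  ext j
  by_cases hj : j = i
  · subst hj; simp [frL, frDec]; omega
  · simp [frL, frDec, hj]

theorem frRec (q : ℕ) (c : (Fin q → ℕ) → ℚ) (d : (Fin q → ℕ) → Fin q → ℚ)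
    (h0 : c (fun _ => 0) = 1)
    (hrec : ∀ l n, (∀ i j : Fin q, i ≤ j → l j ≤ l i) → ∑ i, l i = n + 1 → c l = ∑ i, d l i)
    (hd : ∀ l i n, ∑ i, l i = n + 1 → frGood l i → d l i = c (frDec l i))
    (hd0 : ∀ l i, ¬ frGood l i → d l i = 0) (n : ℕ) :
    ∀ l : Fin q → ℕ, (∀ i j : Fin q, i ≤ j → l j ≤ l i) → ∑ i, l i = n →
      c l = (n.factorial : ℚ) / (∏ i, ((frL l i).factorial : ℚ)) *
        frVdm (fun i => (frL l i : ℚ)) := by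
  induction n with
  | zero =>
    intro l hl hn
    have : l = fun _ => 0 := by
      ext i
      exact (Finset.sum_eq_zero_iff.1 hn) i (Finset.mem_univ i)
    subst this
    rw [h0]
    have := frVdm_base q
    simp only [frL, zero_add]
    rw [this]
    have : (∏ i : Fin q, ((q - 1 - (i : ℕ)).factorial : ℚ)) ≠ 0 :=
      Finset.prod_ne_zero_iff.2 fun i _ => by positivity
    field_simp
    simp
  | succ n ih =>
    intro l hl hn
    have hP : (∏ i : Fin q, ((frL l i).factorial : ℚ)) ≠ 0 :=
      Finset.prod_ne_zero_iff.2 fun i _ => by positivity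
    have hS := frVdm_sum (fun i => (frL l i : ℚ))
    rw [frL_sum, hn] at hS
    have hterm : ∀ i, d l i = (n.factorial : ℚ) / (∏ i, ((frL l i).factorial : ℚ)) *
        ((frL l i : ℚ) * frVdm (Function.update (fun j => (frL l j : ℚ)) i (frL l i - 1))) := by
      intro i
      by_cases hg : frGood l i
      · rw [hd l i n hn hg, ih _ (frDec_mono l hl i hg) (frDec_sum l i hg.1 n hn)]
        have hL := frDec_L l i hg.1
        have hpos : 0 < frL l i := by have := hg.1; simp [frL]; omega
        have e1 : (fun j => (frL (frDec l i) j : ℚ)) =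
            Function.update (fun j => (frL l j : ℚ)) i (frL l i - 1) := by
          ext j
          rw [hL]
          by_cases hj : j = i
          · subst hj; simp [Nat.cast_sub hpos]
          · simp [hj]
        have e2 : (∏ j, ((frL l j).factorial : ℚ)) =
            frL l i * ∏ j, ((frL (frDec l i) j).factorial : ℚ) := by
          rw [← Finset.mul_prod_erase _ _ (Finset.mem_univ i),
            ← Finset.mul_prod_erase _ (fun j => ((frL (frDec l i) j).factorial : ℚ))
              (Finset.mem_univ i), ← mul_assoc, hL]
          congr 1
          · simp
            rw [← Nat.mul_factorial_pred hpos.ne']; push_cast; rfl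
          · refine Finset.prod_congr rfl fun j hj => ?_
            rw [Function.update_of_ne (Finset.ne_of_mem_erase hj)]
        rw [e1, e2]
        have hP' : (∏ i_1 : Fin q, ((frL (frDec l i) i_1).factorial : ℚ)) ≠ 0 :=
          Finset.prod_ne_zero_iff.2 fun i _ => by positivity
        have : (frL l i : ℚ) ≠ 0 := by positivity
        field_simp
      · rw [hd0 l i hg, frNotGood l hl i hg, mul_zero]
    rw [hrec l n hl hn, Finset.sum_congr rfl fun i _ => hterm i, ← Finset.mul_sum, hS,
      Nat.factorial_succ]
    push_cast
    ring

/-- Standard Young tableaux as functions with zero outside the shape. -/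
structure FrSYT {q : ℕ} (l : Fin q → ℕ) (n : ℕ) (T : Fin q × ℕ → ℕ) : Prop where
  out : ∀ x : Fin q × ℕ, l x.1 ≤ x.2 → T x = 0
  pos : ∀ x : Fin q × ℕ, x.2 < l x.1 → 1 ≤ T x
  le : ∀ x : Fin q × ℕ, T x ≤ n
  inj : ∀ x y : Fin q × ℕ, x.2 < l x.1 → y.2 < l y.1 → T x = T y → x = y
  surj : ∀ m, 1 ≤ m → m ≤ n → ∃ x : Fin q × ℕ, x.2 < l x.1 ∧ T x = m
  row : ∀ i j j', j < j' → j' < l i → T (i, j) < T (i, j')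
  col : ∀ i i' j, i < i' → j < l i → j < l i' → T (i, j) < T (i', j)

theorem frDec_lt {q : ℕ} (l : Fin q → ℕ) (i : Fin q) (h : 0 < l i) (x : Fin q × ℕ) :
    x.2 < l x.1 ↔ x = (i, l i - 1) ∨ x.2 < frDec l i x.1 := by
  obtain ⟨a, b⟩ := x
  by_cases ha : a = i
  · subst ha; simp [frDec]; omega
  · simp [frDec, ha]

theorem frDec_corner {q : ℕ} (l : Fin q → ℕ) (i : Fin q) :
    frDec l i i = l i - 1 := by simp [frDec]

theorem FrSYT.add {q : ℕ} {l : Fin q → ℕ} {n : ℕ} {i : Fin q} {T : Fin q × ℕ → ℕ}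
    (hg : frGood l i) (h : FrSYT (frDec l i) n T) :
    FrSYT l (n + 1) (Function.update T (i, l i - 1) (n + 1)) := by
  have hlt := frDec_lt l i hg.1
  have hc := frDec_corner l i
  have hp := hg.1
  have hne : ∀ x : Fin q × ℕ, x.2 < frDec l i x.1 → x ≠ (i, l i - 1) := by
    rintro x hx rfl
    simp [hc] at hx
  refine ⟨?_, ?_, ?_, ?_, ?_, ?_, ?_⟩
  · intro x hx
    have h1 := (hlt x).not.1 (by omega)
    push Not at h1
    rw [Function.update_of_ne h1.1]
    exact h.out x h1.2
  · intro x hx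
    rcases (hlt x).1 hx with rfl | h1
    · simp
    · rw [Function.update_of_ne (hne x h1)]
      exact h.pos x h1
  · intro x
    rw [Function.update_apply]
    split_ifs
    · exact le_rfl
    · exact (h.le x).trans (by omega)
  · intro x y hx hy hxy
    rcases (hlt x).1 hx with rfl | h1 <;> rcases (hlt y).1 hy with rfl | h2
    · rfl
    · rw [Function.update_self, Function.update_of_ne (hne y h2)] at hxy
      have := h.le y
      omega
    · rw [Function.update_self, Function.update_of_ne (hne x h1)] at hxy
      have := h.le x
      omega
    · rw [Function.update_of_ne (hne x h1), Function.update_of_ne (hne y h2)] at hxy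
      exact h.inj x y h1 h2 hxy
  · intro m hm hm'
    by_cases hmn : m = n + 1
    · exact ⟨(i, l i - 1), by simpa using hp, by simp [hmn]⟩
    · obtain ⟨x, hx, hx'⟩ := h.surj m hm (by omega)
      exact ⟨x, (hlt x).2 (Or.inr hx), by rw [Function.update_of_ne (hne x hx), hx']⟩
  · intro a j j' hj hj'
    have hx : (a, j) ≠ (i, l i - 1) := by
      rintro h
      simp only [Prod.mk.injEq] at h
      obtain ⟨rfl, rfl⟩ := h
      omega
    rw [Function.update_of_ne hx]
    rcases (hlt (a, j')).1 hj' with h1 | h1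
    · rw [h1, Function.update_self]
      exact Nat.lt_succ_of_le (h.le _)
    · rw [Function.update_of_ne (hne _ h1)]
      exact h.row a j j' hj h1
  · intro a b j hab ha hb
    have hx : (a, j) ≠ (i, l i - 1) := by
      rintro h
      simp only [Prod.mk.injEq] at h
      obtain ⟨rfl, rfl⟩ := h
      have := hg.2 b hab
      omega
    rw [Function.update_of_ne hx]
    rcases (hlt (b, j)).1 hb with h1 | h1
    · rw [h1, Function.update_self]
      exact Nat.lt_succ_of_le (h.le _)
    · rw [Function.update_of_ne (hne _ h1)]
      rcases (hlt (a, j)).1 ha with h2 | h2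
      · exact absurd h2 hx
      · exact h.col a b j hab h2 h1

theorem FrSYT.rem {q : ℕ} {l : Fin q → ℕ} {n : ℕ} {T : Fin q × ℕ → ℕ}
    (hl : ∀ i j : Fin q, i ≤ j → l j ≤ l i) (h : FrSYT l (n + 1) T) :
    ∃ i, frGood l i ∧ T (i, l i - 1) = n + 1 ∧
      FrSYT (frDec l i) n (Function.update T (i, l i - 1) 0) := by
  obtain ⟨⟨i, j⟩, hij, hT⟩ := h.surj (n + 1) (by omega) le_rfl
  simp only at hij
  have hj : j = l i - 1 := by
    by_contra hj
    have := h.row i j (j + 1) (by omega) (by omega)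
    have := h.le (i, j + 1)
    omega
  have hg : frGood l i := by
    refine ⟨by omega, fun k hk => ?_⟩
    by_contra hk'
    have := h.col i k j hk hij (by omega)
    have := h.le (k, j)
    omega
  subst hj
  refine ⟨i, hg, hT, ?_⟩
  have hlt := frDec_lt l i hg.1
  have hc := frDec_corner l i
  have hp := hg.1
  have hne : ∀ x : Fin q × ℕ, x.2 < frDec l i x.1 → x ≠ (i, l i - 1) := by
    rintro x hx rfl
    simp [hc] at hx
  have hin : ∀ x : Fin q × ℕ, x.2 < frDec l i x.1 → x.2 < l x.1 :=
    fun x hx => (hlt x).2 (Or.inr hx)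
  refine ⟨?_, ?_, ?_, ?_, ?_, ?_, ?_⟩
  · intro x hx
    rw [Function.update_apply]
    split_ifs with hxi
    · rfl
    · refine h.out x (not_lt.1 fun h1 => ?_)
      rcases (hlt x).1 h1 with h2 | h2
      · exact hxi h2
      · omega
  · intro x hx
    rw [Function.update_of_ne (hne x hx)]
    exact h.pos x (hin x hx)
  · intro x
    rw [Function.update_apply]
    split_ifs with hxi
    · omega
    · by_cases hx : x.2 < l x.1
      · have h1 := h.le x
        have h2 : T x ≠ n + 1 := fun h2 => hxi (h.inj x _ hx hij (h2.trans hT.symm))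
        omega
      · rw [h.out x (by omega)]; omega
  · intro x y hx hy hxy
    rw [Function.update_of_ne (hne x hx), Function.update_of_ne (hne y hy)] at hxy
    exact h.inj x y (hin x hx) (hin y hy) hxy
  · intro m hm hm'
    obtain ⟨x, hx, hx'⟩ := h.surj m hm (by omega)
    have hxi : x ≠ (i, l i - 1) := by
      rintro rfl
      omega
    refine ⟨x, ((hlt x).1 hx).resolve_left hxi, ?_⟩
    rw [Function.update_of_ne hxi, hx']
  · intro a j j' hj hj'
    rw [Function.update_of_ne (hne (a, j) (hj.trans hj')), Function.update_of_ne (hne (a, j') hj')]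
    exact h.row a j j' hj (hin (a, j') hj')
  · intro a b j hab ha hb
    rw [Function.update_of_ne (hne (a, j) ha), Function.update_of_ne (hne (b, j) hb)]
    exact h.col a b j hab (hin (a, j) ha) (hin (b, j) hb)

/-- Adding the largest entry. -/
def frG {q : ℕ} (l : Fin q → ℕ) (n : ℕ)
    (z : Σ i : Fin q, {T : Fin q × ℕ → ℕ // frGood l i ∧ FrSYT (frDec l i) n T}) :
    {T : Fin q × ℕ → ℕ // FrSYT l (n + 1) T} :=
  ⟨Function.update z.2.1 (z.1, l z.1 - 1) (n + 1), FrSYT.add z.2.2.1 z.2.2.2⟩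

theorem frG_bij {q : ℕ} (l : Fin q → ℕ) (n : ℕ) (hl : ∀ i j : Fin q, i ≤ j → l j ≤ l i) :
    Function.Bijective (frG l n) := by
  constructor
  · rintro ⟨i, T, hg, hT⟩ ⟨i', T', hg', hT'⟩ he
    have he : Function.update T (i, l i - 1) (n + 1) = Function.update T' (i', l i' - 1) (n + 1) :=
      congrArg Subtype.val he
    have hi : i = i' := by
      by_contra hi
      have h1 := congrFun he (i, l i - 1)
      rw [Function.update_self, Function.update_of_ne (by simp [hi])] at h1
      have := hT'.le (i, l i - 1)
      omega
    subst hi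
    have : T = T' := by
      ext x
      by_cases hx : x = (i, l i - 1)
      · subst hx
        rw [hT.out _ (by simp [frDec]), hT'.out _ (by simp [frDec])]
      · have h1 := congrFun he x
        rwa [Function.update_of_ne hx, Function.update_of_ne hx] at h1
    subst this
    rfl
  · rintro ⟨T, hT⟩
    obtain ⟨i, hg, h1, h2⟩ := hT.rem hl
    refine ⟨⟨i, _, hg, h2⟩, Subtype.ext ?_⟩
    simp [frG, ← h1]

theorem frBase (q : ℕ) : Nat.card {T : Fin q × ℕ → ℕ // FrSYT (fun _ => 0) 0 T} = 1 := by
  rw [Nat.card_eq_one_iff_unique]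
  refine ⟨⟨?_⟩, ⟨⟨fun _ => 0, ?_⟩⟩⟩
  · rintro ⟨T, hT⟩ ⟨T', hT'⟩
    apply Subtype.ext
    ext x
    simp only
    rw [hT.out x (Nat.zero_le _), hT'.out x (Nat.zero_le _)]
  · constructor
    all_goals first | (intros; omega) | simp

theorem frSyt_mem {q : ℕ} {l : Fin q → ℕ} {x : Σ _ : Fin q, ℕ} :
    x ∈ sytShape q l ↔ x.2 < l x.1 := by
  simp [sytShape]

/-- The function associated to a tableau. -/
def frF {q : ℕ} (l : Fin q → ℕ) (T : {x // x ∈ sytShape q l} ≃ Fin (∑ i, l i)) :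
    Fin q × ℕ → ℕ := fun x =>
  if h : x.2 < l x.1 then (T ⟨⟨x.1, x.2⟩, frSyt_mem.2 h⟩ : ℕ) + 1 else 0

theorem frF_in {q : ℕ} (l : Fin q → ℕ) (T : {x // x ∈ sytShape q l} ≃ Fin (∑ i, l i))
    (i : Fin q) (j : ℕ) (h : j < l i) :
    frF l T (i, j) = (T ⟨⟨i, j⟩, frSyt_mem.2 h⟩ : ℕ) + 1 := by
  simp [frF, h]

theorem frF_syt {q : ℕ} (l : Fin q → ℕ) (T : {x // x ∈ sytShape q l} ≃ Fin (∑ i, l i))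
    (hT : IsSYT l T) : FrSYT l (∑ i, l i) (frF l T) := by
  refine ⟨?_, ?_, ?_, ?_, ?_, ?_, ?_⟩
  · rintro ⟨i, j⟩ h
    exact dif_neg (by simpa using h)
  · rintro ⟨i, j⟩ h
    rw [frF_in _ _ _ _ h]; omega
  · rintro ⟨i, j⟩
    by_cases h : j < l i
    · rw [frF_in _ _ _ _ h]
      exact (T _).2
    · rw [frF, dif_neg (by simpa using h)]; omega
  · rintro ⟨i, j⟩ ⟨i', j'⟩ h h' he
    rw [frF_in _ _ _ _ h, frF_in _ _ _ _ h'] at he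
    have := T.injective (Fin.ext (Nat.succ_injective he))
    simpa using this
  · intro m hm hm'
    obtain ⟨⟨⟨i, j⟩, hij⟩, hx⟩ := T.surjective ⟨m - 1, by omega⟩
    have h := frSyt_mem.1 hij
    refine ⟨(i, j), h, ?_⟩
    rw [frF_in _ _ _ _ h, hx]
    simp only; omega
  · intro i j j' hj hj'
    rw [frF_in _ _ _ _ hj', frF_in _ _ _ _ (hj.trans hj')]
    have := Fin.lt_def.1 (hT.1 ⟨⟨i, j⟩, frSyt_mem.2 (hj.trans hj')⟩ ⟨⟨i, j'⟩, frSyt_mem.2 hj'⟩ rfl hj)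
    omega
  · intro i i' j hi hj hj'
    rw [frF_in _ _ _ _ hj', frF_in _ _ _ _ hj]
    have := Fin.lt_def.1 (hT.2 ⟨⟨i, j⟩, frSyt_mem.2 hj⟩ ⟨⟨i', j⟩, frSyt_mem.2 hj'⟩ hi rfl)
    omega

theorem frF_bij {q : ℕ} (l : Fin q → ℕ) : Function.Bijective
    (fun T : {T : {x // x ∈ sytShape q l} ≃ Fin (∑ i, l i) // IsSYT l T} =>
      (⟨frF l T.1, frF_syt l T.1 T.2⟩ : {T : Fin q × ℕ → ℕ // FrSYT l (∑ i, l i) T})) := by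
  constructor
  · rintro ⟨T, hT⟩ ⟨T', hT'⟩ he
    have he : frF l T = frF l T' := congrArg Subtype.val he
    apply Subtype.ext
    apply Equiv.ext
    rintro ⟨⟨i, j⟩, hij⟩
    have h1 := congrFun he (i, j)
    rw [frF_in _ _ _ _ (frSyt_mem.1 hij), frF_in _ _ _ _ (frSyt_mem.1 hij)] at h1
    exact Fin.ext (Nat.succ_injective h1)
  · rintro ⟨F, hF⟩
    let g : {x // x ∈ sytShape q l} → Fin (∑ i, l i) := fun x => ⟨F (x.1.1, x.1.2) - 1, by
      have h1 := hF.pos (x.1.1, x.1.2) (frSyt_mem.1 x.2)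
      have h2 := hF.le (x.1.1, x.1.2)
      omega⟩
    have hg : ∀ x, (g x : ℕ) + 1 = F (x.1.1, x.1.2) := fun x => by
      have h1 := hF.pos (x.1.1, x.1.2) (frSyt_mem.1 x.2)
      simp only [g]; omega
    have hb : Function.Bijective g := by
      constructor
      · rintro ⟨⟨i, j⟩, h⟩ ⟨⟨i', j'⟩, h'⟩ he
        have e1 := hg ⟨⟨i, j⟩, h⟩
        have e2 := hg ⟨⟨i', j'⟩, h'⟩
        rw [he] at e1
        have := hF.inj _ _ (frSyt_mem.1 h) (frSyt_mem.1 h') (e1.symm.trans e2)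
        simpa using this
      · intro m
        obtain ⟨⟨i, j⟩, hx, hx'⟩ := hF.surj (m + 1) (by omega) m.2
        refine ⟨⟨⟨i, j⟩, frSyt_mem.2 hx⟩, Fin.ext ?_⟩
        have := hg ⟨⟨i, j⟩, frSyt_mem.2 hx⟩
        simp only at this
        omega
    refine ⟨⟨Equiv.ofBijective g hb, ?_, ?_⟩, ?_⟩
    · rintro ⟨⟨i, j⟩, h⟩ ⟨⟨i', j'⟩, h'⟩ he hlt
      simp only at he hlt
      subst he
      have e1 := hg ⟨⟨i, j⟩, h⟩
      have e2 := hg ⟨⟨i, j'⟩, h'⟩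
      have := hF.row i j j' hlt (frSyt_mem.1 h')
      simp only [Equiv.ofBijective_apply, Fin.lt_def] at *
      omega
    · rintro ⟨⟨i, j⟩, h⟩ ⟨⟨i', j'⟩, h'⟩ hlt he
      simp only at he hlt
      subst he
      have e1 := hg ⟨⟨i, j⟩, h⟩
      have e2 := hg ⟨⟨i', j⟩, h'⟩
      have := hF.col i i' j hlt (frSyt_mem.1 h) (frSyt_mem.1 h')
      rw [Equiv.ofBijective_apply, Equiv.ofBijective_apply, Fin.lt_def]
      simp only at e1 e2
      omega
    · apply Subtype.ext
      ext ⟨i, j⟩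
      simp only
      by_cases h : j < l i
      · rw [frF_in _ _ _ _ h]
        exact hg ⟨⟨i, j⟩, frSyt_mem.2 h⟩
      · rw [frF, dif_neg (by simpa using h), hF.out _ (by simpa using h)]

theorem frFinite {q : ℕ} (l : Fin q → ℕ) (n : ℕ) (hn : ∑ i, l i = n) :
    Finite {T : Fin q × ℕ → ℕ // FrSYT l n T} := by
  subst hn
  exact Finite.of_surjective _ (frF_bij l).2

theorem frCount {q : ℕ} (l : Fin q → ℕ) :
    sytCount q l = Nat.card {T : Fin q × ℕ → ℕ // FrSYT l (∑ i, l i) T} :=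
  Nat.card_eq_of_bijective _ (frF_bij l)

/-- **Frobenius formula.** For a partition `λ = (λ_1 ≥ ⋯ ≥ λ_q ≥ 1)` (here zero-indexed,
so `l i = λ_{i+1}`) and `ℓ_i = λ_i + q - i` (zero-indexed: `l i + (q - 1 - i)`), the number
of standard Young tableaux of shape `λ` is
`f^λ = (|λ|! / ∏_i ℓ_i!) · ∏_{i < j} (ℓ_i - ℓ_j)`. -/
theorem frobenius_formula (q : ℕ) (hq : 0 < q) (l : Fin q → ℕ)
    (hmono : ∀ i j : Fin q, i ≤ j → l j ≤ l i) (hpos : ∀ i, 1 ≤ l i) :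
    (sytCount q l : ℚ) =
      (((∑ i, l i).factorial : ℚ) /
          ∏ i : Fin q, ((l i + (q - 1 - (i : ℕ))).factorial : ℚ)) *
        ∏ i : Fin q, ∏ j ∈ Finset.univ.filter (fun j : Fin q => i < j),
          (((l i + (q - 1 - (i : ℕ)) : ℕ) : ℚ) - ((l j + (q - 1 - (j : ℕ)) : ℕ) : ℚ)) := by
  refine frRec q (fun l => (sytCount q l : ℚ))
    (fun l i => (Nat.card {T : Fin q × ℕ → ℕ //
      frGood l i ∧ FrSYT (frDec l i) (∑ j, frDec l i j) T} : ℚ)) ?_ ?_ ?_ ?_ _ l hmono rfl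
  · simp only [frCount, Finset.sum_const_zero, frBase, Nat.cast_one]
  · intro l n hl hn
    have e : ∀ i, Nat.card {T : Fin q × ℕ → ℕ //
        frGood l i ∧ FrSYT (frDec l i) (∑ j, frDec l i j) T} = Nat.card {T : Fin q × ℕ → ℕ //
        frGood l i ∧ FrSYT (frDec l i) n T} := by
      intro i
      by_cases hg : frGood l i
      · rw [frDec_sum l i hg.1 n hn]
      · simp [hg]
    simp only [e, frCount]
    rw [hn, ← Nat.card_eq_of_bijective _ (frG_bij l n hl)]
    have : ∀ i, Finite {T : Fin q × ℕ → ℕ // frGood l i ∧ FrSYT (frDec l i) n T} := by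
      intro i
      by_cases hg : frGood l i
      · have := frFinite (frDec l i) n (frDec_sum l i hg.1 n hn)
        simpa [hg] using this
      · simp only [hg, false_and]; infer_instance
    rw [Nat.card_sigma]
    push_cast
    rfl
  · intro l i n hn hg
    simp only [hg, true_and, frCount]
  · intro l i hg
    simp [hg]
end

section
/- Let r and d be integers with 2 ≤ d < r, let ε be the rectangular partition consisting of d parts all equal to r − d, let m = d(r − d) + 1, and let ε+p(2) denote the partition (r − d + 1, r − d + 1, r − d, …, r − d) with d parts, obtained from ε by adding one box to each of the first two rows. Then 2 r (r − 1) · f^{ε+p(2)} = m (m + 1) d (d − 1) · f^{ε}. -/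
structure SytP {q : ℕ} (l : Fin q → ℕ) (n : ℕ) (T : Fin q → ℕ → ℕ) : Prop where
  out : ∀ i j, l i ≤ j → T i j = 0
  lt : ∀ i j, j < l i → T i j < n
  inj : ∀ i j i' j', j < l i → j' < l i' → T i j = T i' j' → i = i' ∧ j = j'
  surj : ∀ k, k < n → ∃ i j, j < l i ∧ T i j = k
  row : ∀ i j j', j < j' → j' < l i → T i j < T i j'
  col : ∀ i i' j, i < i' → j < l i → j < l i' → T i j < T i' j

theorem mem_sytShape {q : ℕ} (l : Fin q → ℕ) (x : Σ _ : Fin q, ℕ) :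
    x ∈ sytShape q l ↔ x.2 < l x.1 := by
  simp [sytShape]

def sytToFun {q : ℕ} (l : Fin q → ℕ)
    (T : {x // x ∈ sytShape q l} ≃ Fin (∑ i, l i)) : Fin q → ℕ → ℕ :=
  fun i j => if h : j < l i then (T ⟨⟨i, j⟩, (mem_sytShape l _).2 h⟩ : ℕ) else 0

theorem sytToFun_pos {q : ℕ} (l : Fin q → ℕ)
    (T : {x // x ∈ sytShape q l} ≃ Fin (∑ i, l i)) (i j) (h : j < l i) :
    sytToFun l T i j = (T ⟨⟨i, j⟩, (mem_sytShape l _).2 h⟩ : ℕ) := by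
  simp [sytToFun, h]

theorem sytToFun_P {q : ℕ} (l : Fin q → ℕ)
    (T : {x // x ∈ sytShape q l} ≃ Fin (∑ i, l i)) (hT : IsSYT l T) :
    SytP l (∑ i, l i) (sytToFun l T) := by
  constructor
  · intro i j h
    simp [sytToFun, Nat.not_lt.2 h]
  · intro i j h
    rw [sytToFun_pos l T i j h]
    exact Fin.isLt _
  · intro i j i' j' h h' e
    rw [sytToFun_pos l T i j h, sytToFun_pos l T i' j' h'] at e
    have := T.injective (Fin.ext e)
    simpa using this
  · intro k hk
    obtain ⟨⟨⟨i, j⟩, h⟩, hx⟩ := T.surjective ⟨k, hk⟩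
    have h' := (mem_sytShape l _).1 h
    refine ⟨i, j, h', ?_⟩
    rw [sytToFun_pos l T i j h', hx]
  · intro i j j' hj h
    rw [sytToFun_pos l T i j (hj.trans h), sytToFun_pos l T i j' h]
    exact hT.1 _ _ rfl hj
  · intro i i' j hi h h'
    rw [sytToFun_pos l T i j h, sytToFun_pos l T i' j h']
    exact hT.2 _ _ hi rfl

theorem sytCount_eq {q : ℕ} (l : Fin q → ℕ) :
    sytCount q l = Nat.card {T // SytP l (∑ i, l i) T} := by
  unfold sytCount
  refine Nat.card_congr (Equiv.ofBijective
    (fun T => ⟨sytToFun l T.1, sytToFun_P l T.1 T.2⟩) ⟨?_, ?_⟩)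
  · rintro ⟨T, hT⟩ ⟨T', hT'⟩ e
    simp only [Subtype.mk.injEq] at e ⊢
    ext ⟨⟨i, j⟩, h⟩
    have h' := (mem_sytShape l _).1 h
    rw [← sytToFun_pos l T i j h', e, sytToFun_pos l T' i j h']
  · rintro ⟨f, hf⟩
    let g : {x // x ∈ sytShape q l} → Fin (∑ i, l i) :=
      fun x => ⟨f x.1.1 x.1.2, hf.lt _ _ ((mem_sytShape l _).1 x.2)⟩
    have hg : Function.Bijective g := by
      constructor
      · rintro ⟨⟨i, j⟩, h⟩ ⟨⟨i', j'⟩, h'⟩ e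
        obtain ⟨rfl, rfl⟩ := hf.inj i j i' j' ((mem_sytShape l _).1 h)
          ((mem_sytShape l _).1 h') (congrArg Fin.val e)
        rfl
      · rintro ⟨k, hk⟩
        obtain ⟨i, j, h, e⟩ := hf.surj k hk
        exact ⟨⟨⟨i, j⟩, (mem_sytShape l _).2 h⟩, Fin.ext e⟩
    refine ⟨⟨Equiv.ofBijective g hg, ?_, ?_⟩, ?_⟩
    · rintro ⟨⟨i, j⟩, h⟩ ⟨⟨i', j'⟩, h'⟩ e hl
      simp only at e hl
      subst e
      exact hf.row i j j' hl ((mem_sytShape l _).1 h')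
    · rintro ⟨⟨i, j⟩, h⟩ ⟨⟨i', j'⟩, h'⟩ hl e
      simp only at e hl
      subst e
      exact hf.col i i' j hl ((mem_sytShape l _).1 h) ((mem_sytShape l _).1 h')
    · apply Subtype.ext
      funext i j
      by_cases h : j < l i
      · exact sytToFun_pos l _ i j h
      · have h2 := hf.out i j (not_lt.1 h)
        have h3 : sytToFun l (Equiv.ofBijective g hg) i j = 0 := by simp [sytToFun, h]
        exact h3.trans h2.symm

def SytRem {q : ℕ} (l : Fin q → ℕ) (i : Fin q) : Prop :=
  0 < l i ∧ ∀ i', i < i' → l i' < l i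

def sytDec {q : ℕ} (l : Fin q → ℕ) (i : Fin q) : Fin q → ℕ :=
  fun a => if a = i then l a - 1 else l a

def sytAdd {q : ℕ} (l : Fin q → ℕ) (n : ℕ) (i : Fin q) (T : Fin q → ℕ → ℕ) : Fin q → ℕ → ℕ :=
  fun a b => if a = i ∧ b + 1 = l i then n else T a b

def sytDel {q : ℕ} (l : Fin q → ℕ) (i : Fin q) (T : Fin q → ℕ → ℕ) : Fin q → ℕ → ℕ :=
  fun a b => if a = i ∧ b + 1 = l i then 0 else T a b

theorem sytDec_lt {q : ℕ} (l : Fin q → ℕ) (i : Fin q) (a b) :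
    b < sytDec l i a ↔ b < l a ∧ ¬ (a = i ∧ b + 1 = l i) := by
  unfold sytDec
  split_ifs with h
  · subst h; simp; omega
  · simp [h]

theorem sytAdd_P {q : ℕ} (l : Fin q → ℕ) (n : ℕ) (i : Fin q) (hi : SytRem l i)
    (T : Fin q → ℕ → ℕ) (hT : SytP (sytDec l i) n T) : SytP l (n + 1) (sytAdd l n i T) := by
  obtain ⟨h0, h1⟩ := hi
  have key : ∀ a b, b < l a → (a = i ∧ b + 1 = l i) ∨ b < sytDec l i a := by
    intro a b h
    rw [sytDec_lt]
    tauto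
  have key2 : ∀ a b, b < l a → sytAdd l n i T a b ≤ n := by
    intro a b h
    unfold sytAdd
    split_ifs with c
    · exact le_rfl
    · exact (hT.lt a b ((sytDec_lt l i a b).2 ⟨h, c⟩)).le
  constructor
  · intro a b h
    unfold sytAdd
    rw [if_neg]
    · apply hT.out
      rw [← not_lt, sytDec_lt]
      omega
    · rintro ⟨rfl, c⟩
      omega
  · intro a b h
    exact Nat.lt_succ_of_le (key2 a b h)
  · intro a b a' b' h h' e
    unfold sytAdd at e
    split_ifs at e with c c' c'
    · exact ⟨c.1.trans c'.1.symm, by omega⟩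
    · have := hT.lt a' b' ((sytDec_lt l i _ _).2 ⟨h', c'⟩)
      omega
    · have := hT.lt a b ((sytDec_lt l i _ _).2 ⟨h, c⟩)
      omega
    · exact hT.inj a b a' b' ((sytDec_lt l i _ _).2 ⟨h, c⟩) ((sytDec_lt l i _ _).2 ⟨h', c'⟩) e
  · intro k hk
    rcases Nat.lt_succ_iff_lt_or_eq.1 hk with hk | rfl
    · obtain ⟨a, b, h, e⟩ := hT.surj k hk
      have := (sytDec_lt l i _ _).1 h
      exact ⟨a, b, this.1, by unfold sytAdd; rw [if_neg this.2, e]⟩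
    · refine ⟨i, l i - 1, by omega, ?_⟩
      unfold sytAdd
      rw [if_pos ⟨rfl, by omega⟩]
  · intro a b b' hb h
    have c : ¬ (a = i ∧ b + 1 = l i) := by
      rintro ⟨rfl, c⟩
      omega
    unfold sytAdd
    rw [if_neg c]
    split_ifs with c'
    · exact hT.lt a b ((sytDec_lt l i _ _).2 ⟨hb.trans h, c⟩)
    · exact hT.row a b b' hb ((sytDec_lt l i _ _).2 ⟨h, c'⟩)
  · intro a a' b ha h h'
    have c : ¬ (a = i ∧ b + 1 = l i) := by
      rintro ⟨rfl, c⟩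
      have := h1 a' ha
      omega
    unfold sytAdd
    rw [if_neg c]
    split_ifs with c'
    · exact hT.lt a b ((sytDec_lt l i _ _).2 ⟨h, c⟩)
    · exact hT.col a a' b ha ((sytDec_lt l i _ _).2 ⟨h, c⟩) ((sytDec_lt l i _ _).2 ⟨h', c'⟩)

theorem sytDel_P {q : ℕ} (l : Fin q → ℕ) (n : ℕ) (i : Fin q) (hi : SytRem l i)
    (T : Fin q → ℕ → ℕ) (hT : SytP l (n + 1) T) (hn : T i (l i - 1) = n) :
    SytP (sytDec l i) n (sytDel l i T) := by
  obtain ⟨h0, h1⟩ := hi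
  have key : ∀ a b, b < sytDec l i a → b < l a ∧ sytDel l i T a b = T a b := by
    intro a b h
    rw [sytDec_lt] at h
    exact ⟨h.1, by unfold sytDel; rw [if_neg h.2]⟩
  constructor
  · intro a b h
    unfold sytDel
    split_ifs with c
    · rfl
    · apply hT.out
      rw [← not_lt, sytDec_lt] at h
      by_contra hh
      exact h ⟨by omega, c⟩
  · intro a b h
    obtain ⟨h2, h3⟩ := key a b h
    rw [h3]
    have h4 := hT.lt a b h2
    have : T a b ≠ n := by
      intro e
      have := hT.inj a b i (l i - 1) h2 (by omega) (e.trans hn.symm)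
      exact ((sytDec_lt l i _ _).1 h).2 ⟨this.1, by omega⟩
    omega
  · intro a b a' b' h h' e
    obtain ⟨h2, h3⟩ := key a b h
    obtain ⟨h2', h3'⟩ := key a' b' h'
    exact hT.inj a b a' b' h2 h2' (by rw [← h3, ← h3', e])
  · intro k hk
    obtain ⟨a, b, h, e⟩ := hT.surj k (by omega)
    have : b < sytDec l i a := by
      rw [sytDec_lt]
      refine ⟨h, ?_⟩
      rintro ⟨rfl, c⟩
      have : b = l a - 1 := by omega
      subst this
      omega
    exact ⟨a, b, this, by rw [(key a b this).2, e]⟩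
  · intro a b b' hb h
    obtain ⟨h2, h3⟩ := key a b' h
    obtain ⟨h2', h3'⟩ := key a b (hb.trans h)
    rw [h3, h3']
    exact hT.row a b b' hb h2
  · intro a a' b ha h h'
    obtain ⟨h2, h3⟩ := key a b h
    obtain ⟨h2', h3'⟩ := key a' b h'
    rw [h3, h3']
    exact hT.col a a' b ha h2 h2'

theorem sytStep_bij {q : ℕ} (l : Fin q → ℕ) (n : ℕ) :
    Function.Bijective (fun x : (Σ i : {i // SytRem l i}, {T // SytP (sytDec l i.1) n T}) =>
      (⟨sytAdd l n x.1.1 x.2.1, sytAdd_P l n x.1.1 x.1.2 x.2.1 x.2.2⟩ :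
        {T // SytP l (n + 1) T})) := by
  constructor
  · rintro ⟨⟨i, hi⟩, ⟨T, hT⟩⟩ ⟨⟨i', hi'⟩, ⟨T', hT'⟩⟩ e
    have e : sytAdd l n i T = sytAdd l n i' T' := congrArg Subtype.val e
    have hP := sytAdd_P l n i hi T hT
    have e1 : sytAdd l n i T i (l i - 1) = n := by
      unfold sytAdd
      rw [if_pos ⟨rfl, by have := hi.1; omega⟩]
    have e2 : sytAdd l n i T i' (l i' - 1) = n := by
      rw [e]
      unfold sytAdd
      rw [if_pos ⟨rfl, by have := hi'.1; omega⟩]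
    obtain ⟨rfl, -⟩ := hP.inj i (l i - 1) i' (l i' - 1) (by have := hi.1; omega)
      (by have := hi'.1; omega) (e1.trans e2.symm)
    have : T = T' := by
      funext a b
      by_cases c : a = i ∧ b + 1 = l i
      · have : ¬ b < sytDec l i a := by
          rw [sytDec_lt]; tauto
        rw [hT.out a b (not_lt.1 this), hT'.out a b (not_lt.1 this)]
      · have := congrFun (congrFun e a) b
        unfold sytAdd at this
        rwa [if_neg c, if_neg c] at this
    subst this
    rfl
  · rintro ⟨T, hT⟩
    obtain ⟨i, j, h, e⟩ := hT.surj n (by omega)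
    have hj : j = l i - 1 := by
      by_contra hj
      have h1 := hT.row i j (l i - 1) (by omega) (by omega)
      have h2 := hT.lt i (l i - 1) (by omega)
      omega
    have hi : SytRem l i := by
      refine ⟨by omega, fun i' hi' => ?_⟩
      by_contra hc
      have h1 := hT.col i i' j hi' h (by omega)
      have h2 := hT.lt i' j (by omega)
      omega
    subst hj
    refine ⟨⟨⟨i, hi⟩, ⟨sytDel l i T, sytDel_P l n i hi T hT e⟩⟩, ?_⟩
    apply Subtype.ext
    funext a b
    simp only [sytAdd, sytDel]
    split_ifs with c
    · obtain ⟨rfl, c⟩ := c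
      rw [← e]
      congr 1
      omega
    · rfl

def sytM {q : ℕ} (x : Fin q → ℕ) : Matrix (Fin q) (Fin q) ℤ :=
  Matrix.of fun i j => ((x i).descFactorial (q - 1 - j) : ℤ)

def sytX {q : ℕ} (l : Fin q → ℕ) : Fin q → ℕ := fun i => l i + (q - 1 - i)

theorem syt_desc (x k : ℕ) :
    (x : ℤ) * ((x - 1).descFactorial k : ℤ) = ((x : ℤ) - k) * (x.descFactorial k : ℤ) := by
  rcases x with _ | x
  · rcases k with _ | k <;> simp
  · have h1 : ((x + 1).descFactorial (k + 1)) = (x + 1) * x.descFactorial k :=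
      Nat.succ_descFactorial_succ x k
    have h2 : ((x + 1).descFactorial (k + 1)) = (x + 1 - k) * (x + 1).descFactorial k :=
      Nat.descFactorial_succ _ _
    rw [Nat.add_sub_cancel]
    by_cases h : k ≤ x + 1
    · rw [h1] at h2
      have := congrArg (Nat.cast : ℕ → ℤ) h2
      push_cast [Nat.cast_sub h] at this ⊢
      exact this
    · rw [Nat.descFactorial_of_lt (by omega), Nat.descFactorial_of_lt (by omega)]
      simp

theorem sytM_sum {q : ℕ} (x : Fin q → ℕ) :
    ∑ i, (x i : ℤ) * (sytM (sytDec x i)).det =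
      (∑ i, (x i : ℤ) - ∑ i : Fin q, ((q - 1 - (i : ℕ) : ℕ) : ℤ)) * (sytM x).det := by
  simp only [Matrix.det_apply', Finset.mul_sum]
  rw [Finset.sum_comm]
  refine Finset.sum_congr rfl fun σ _ => ?_
  rw [← Equiv.sum_comp σ (fun i => (x i : ℤ)), ← Finset.sum_sub_distrib, Finset.sum_mul,
    ← Equiv.sum_comp σ]
  refine Finset.sum_congr rfl fun a _ => ?_
  rw [← Finset.mul_prod_erase Finset.univ _ (Finset.mem_univ a),
    ← Finset.mul_prod_erase Finset.univ (fun i => sytM x (σ i) i) (Finset.mem_univ a)]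
  have h1 : ∏ j ∈ Finset.univ.erase a, sytM (sytDec x (σ a)) (σ j) j =
      ∏ j ∈ Finset.univ.erase a, sytM x (σ j) j := by
    refine Finset.prod_congr rfl fun j hj => ?_
    have : σ j ≠ σ a := fun e => (Finset.mem_erase.1 hj).1 (σ.injective e)
    simp [sytM, sytDec, this]
  rw [h1]
  have h2 := syt_desc (x (σ a)) (q - 1 - (a : ℕ))
  simp only [sytM, sytDec, Matrix.of_apply, if_true]
  linear_combination (↑↑(Equiv.Perm.sign σ) *
    ∏ j ∈ Finset.univ.erase a, ((x (σ j)).descFactorial (q - 1 - (j : ℕ)) : ℤ)) * h2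

theorem sytM_zero {q : ℕ} :
    (sytM (sytX (fun _ : Fin q => 0))).det = ∏ i, ((sytX (fun _ : Fin q => 0) i).factorial : ℤ) := by
  rw [Matrix.det_of_isUpperTriangular]
  · refine Finset.prod_congr rfl fun i _ => ?_
    simp [sytM, sytX, Nat.descFactorial_self]
  · intro i j h
    simp only [id] at h
    have : (j : ℕ) < i := h
    simp only [sytM, sytX, Matrix.of_apply]
    rw [Nat.descFactorial_of_lt (by omega)]
    rfl

theorem sytX_dec {q : ℕ} (l : Fin q → ℕ) (i : Fin q) (h : 0 < l i) :
    sytX (sytDec l i) = sytDec (sytX l) i := by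
  funext a
  simp only [sytX, sytDec]
  split_ifs with c
  · subst c; omega
  · rfl

theorem sytM_notRem {q : ℕ} (l : Fin q → ℕ) (hl : Antitone l) (i : Fin q) (h : ¬ SytRem l i) :
    (sytX l i : ℤ) * (sytM (sytDec (sytX l) i)).det = 0 := by
  by_cases h0 : sytX l i = 0
  · simp [h0]
  have : ∃ i' : Fin q, (i' : ℕ) = i + 1 ∧ l i' = l i := by
    unfold SytRem at h
    by_cases c : l i = 0
    · unfold sytX at h0
      refine ⟨⟨i + 1, by omega⟩, rfl, ?_⟩
      have : l ⟨i + 1, by omega⟩ ≤ l i := hl (Fin.le_def.2 (by simp))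
      omega
    · push Not at h
      obtain ⟨i', h1, h2⟩ := h (by omega)
      have h3 : (i : ℕ) < i' := h1
      have := i'.isLt
      refine ⟨⟨i + 1, by omega⟩, rfl, ?_⟩
      have h4 : l ⟨i + 1, by omega⟩ ≤ l i := hl (Fin.le_def.2 (by simp))
      have h5 : l i' ≤ l ⟨i + 1, by omega⟩ := hl (Fin.le_def.2 (by simp; omega))
      omega
  obtain ⟨i', h1, h2⟩ := this
  have hne : i' ≠ i := by
    rintro rfl; omega
  rw [Matrix.det_zero_of_row_eq hne, mul_zero]
  funext j
  have : sytDec (sytX l) i i' = sytDec (sytX l) i i := by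
    have := i'.isLt
    simp only [sytDec, if_neg hne, if_true, sytX]
    omega
  simp only [sytM, Matrix.of_apply, this]

theorem sytDec_anti {q : ℕ} (l : Fin q → ℕ) (hl : Antitone l) (i : Fin q) (h : SytRem l i) :
    Antitone (sytDec l i) := by
  intro a b hab
  have h1 := hl hab
  unfold sytDec
  split_ifs with c d d
  · omega
  · omega
  · subst d
    have := h.2 b (lt_of_le_of_ne hab (Ne.symm c))
    omega
  · exact h1

theorem sytDec_sum {q : ℕ} (l : Fin q → ℕ) (i : Fin q) (h : 0 < l i) :
    ∑ a, sytDec l i a + 1 = ∑ a, l a := by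
  rw [← Finset.add_sum_erase Finset.univ _ (Finset.mem_univ i),
    ← Finset.add_sum_erase Finset.univ l (Finset.mem_univ i)]
  have : ∑ a ∈ Finset.univ.erase i, sytDec l i a = ∑ a ∈ Finset.univ.erase i, l a := by
    refine Finset.sum_congr rfl fun a ha => ?_
    simp [sytDec, (Finset.mem_erase.1 ha).1]
  rw [this]
  simp only [sytDec, if_true]
  omega

theorem sytDec_fact {q : ℕ} (x : Fin q → ℕ) (i : Fin q) (h : 0 < x i) :
    ∏ a, ((x a).factorial : ℤ) = x i * ∏ a, ((sytDec x i a).factorial : ℤ) := by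
  rw [← Finset.mul_prod_erase Finset.univ _ (Finset.mem_univ i),
    ← Finset.mul_prod_erase Finset.univ (fun a => ((sytDec x i a).factorial : ℤ))
      (Finset.mem_univ i)]
  have : ∏ a ∈ Finset.univ.erase i, ((sytDec x i a).factorial : ℤ) =
      ∏ a ∈ Finset.univ.erase i, ((x a).factorial : ℤ) := by
    refine Finset.prod_congr rfl fun a ha => ?_
    simp [sytDec, (Finset.mem_erase.1 ha).1]
  rw [this]
  simp only [sytDec, if_true]
  rw [← mul_assoc]
  congr 1
  rw [← Nat.mul_factorial_pred h.ne']
  push_cast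
  rfl

theorem syt_formula {q : ℕ} (n : ℕ) : ∀ l : Fin q → ℕ, Antitone l → ∑ i, l i = n →
    Finite {T // SytP l n T} ∧
    (Nat.card {T // SytP l n T} : ℤ) * ∏ i, ((sytX l i).factorial : ℤ) =
      n.factorial * (sytM (sytX l)).det := by
  classical
  induction n with
  | zero =>
    intro l hl hs
    have h0 : l = fun _ => 0 := by
      funext i
      exact (Finset.sum_eq_zero_iff.1 hs) i (Finset.mem_univ i)
    subst h0
    have : Unique {T // SytP (fun _ : Fin q => 0) 0 T} :=
      { default := ⟨fun _ _ => 0, by constructor <;> simp⟩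
        uniq := by
          rintro ⟨T, hT⟩
          apply Subtype.ext
          funext i j
          exact hT.out i j (Nat.zero_le _) }
    refine ⟨inferInstance, ?_⟩
    rw [Nat.card_unique, sytM_zero]
    simp
  | succ n ih =>
    intro l hl hs
    have hbij := sytStep_bij l n
    have ih' : ∀ i : {i // SytRem l i}, _ := fun i =>
      ih (sytDec l i.1) (sytDec_anti l hl i.1 i.2) (by
        have := sytDec_sum l i.1 i.2.1
        omega)
    have : ∀ i : {i // SytRem l i}, Finite {T // SytP (sytDec l i.1) n T} := fun i => (ih' i).1
    refine ⟨Finite.of_surjective _ hbij.2, ?_⟩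
    rw [← Nat.card_congr (Equiv.ofBijective _ hbij), Nat.card_sigma]
    push_cast
    rw [Finset.sum_mul]
    have hterm : ∀ i : {i // SytRem l i},
        (Nat.card {T // SytP (sytDec l i.1) n T} : ℤ) * ∏ a, ((sytX l a).factorial : ℤ) =
        n.factorial * ((sytX l i.1 : ℤ) * (sytM (sytDec (sytX l) i.1)).det) := by
      intro i
      have h1 := (ih' i).2
      have h2 := i.2.1
      rw [sytX_dec l i.1 h2] at h1
      rw [sytDec_fact (sytX l) i.1 (by unfold sytX; omega)]
      linear_combination (sytX l i.1 : ℤ) * h1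
    rw [Finset.sum_congr rfl fun i _ => hterm i, ← Finset.mul_sum]
    have hsub : ∑ i : {i // SytRem l i}, ((sytX l i.1 : ℤ) * (sytM (sytDec (sytX l) i.1)).det) =
        ∑ i, ((sytX l i : ℤ) * (sytM (sytDec (sytX l) i)).det) := by
      rw [← Finset.sum_filter_of_ne (p := SytRem l)]
      · exact (Finset.sum_subtype (Finset.univ.filter (SytRem l)) (by simp)
          (fun i => ((sytX l i : ℤ) * (sytM (sytDec (sytX l) i)).det))).symm
      · intro i _ hne
        by_contra hc
        exact hne (sytM_notRem l hl i hc)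
    rw [hsub, sytM_sum, Nat.factorial_succ]
    have : (∑ i, (sytX l i : ℤ)) - ∑ i : Fin q, ((q - 1 - (i : ℕ) : ℕ) : ℤ) = n + 1 := by
      rw [← Finset.sum_sub_distrib]
      have : ∀ i : Fin q, (sytX l i : ℤ) - ((q - 1 - (i : ℕ) : ℕ) : ℤ) = (l i : ℤ) := by
        intro i; unfold sytX; push_cast; ring
      rw [Finset.sum_congr rfl fun i _ => this i]
      exact_mod_cast hs
    rw [this]
    push_cast
    ring

theorem sytM_vand {q : ℕ} : ∃ c : ℤ, ∀ x : Fin q → ℕ,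
    (sytM x).det = c * ∏ i : Fin q, ∏ j ∈ Finset.Ioi i, ((x j : ℤ) - x i) := by
  refine ⟨(Equiv.Perm.sign (Fin.revPerm : Equiv.Perm (Fin q)) : ℤ), fun x => ?_⟩
  rw [← Matrix.det_vandermonde (fun i => (x i : ℤ)),
    Matrix.det_eval_matrixOfPolynomials_eq_det_vandermonde _
      (fun i : Fin q => descPochhammer ℤ i) (fun i => descPochhammer_natDegree ℤ i)
      (fun i => monic_descPochhammer ℤ i)]
  have := Matrix.det_permute' (Fin.revPerm : Equiv.Perm (Fin q)) (Matrix.of (fun i j : Fin q =>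
    (descPochhammer ℤ (j : ℕ)).eval (x i : ℤ)))
  rw [← Int.cast_id (n := ((Equiv.Perm.sign (Fin.revPerm : Equiv.Perm (Fin q)) : ℤˣ) : ℤ)), ← this]
  congr 1
  ext i j
  simp only [sytM, Matrix.of_apply, Matrix.submatrix_apply, id, descPochhammer_eval_eq_descFactorial,
    Fin.revPerm_apply, Fin.val_rev]
  congr 2
  omega

theorem syt_prod_tele (e c : ℕ) :
    (c : ℤ) * ∏ j : Fin e, (-((j : ℕ) + c + 1 : ℤ)) = (c + e) * ∏ j : Fin e, (-((j : ℕ) + c : ℤ)) := by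
  induction e with
  | zero => simp
  | succ e ih =>
    rw [Fin.prod_univ_castSucc, Fin.prod_univ_castSucc]
    simp only [Fin.val_castSucc, Fin.val_last]
    push_cast
    linear_combination (-((e : ℤ) + c + 1)) * ih

theorem syt_vand_ratio (s e : ℕ) (x y : Fin (e + 2) → ℕ)
    (hx : ∀ i, x i = s + (e + 1 - i))
    (hy : ∀ i : Fin (e + 2), y i = (if (i : ℕ) < 2 then s + 1 else s) + (e + 1 - i)) :
    2 * ∏ i : Fin (e + 2), ∏ j ∈ Finset.Ioi i, ((y j : ℤ) - y i) =
      (e + 2) * (e + 1) * ∏ i : Fin (e + 2), ∏ j ∈ Finset.Ioi i, ((x j : ℤ) - x i) := by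
  have y0 : (y 0 : ℤ) = s + e + 2 := by rw [hy]; simp; ring
  have y1 : (y (Fin.succ 0) : ℤ) = s + e + 1 := by rw [hy]; simp; ring
  have y2 : ∀ j : Fin e, (y j.succ.succ : ℤ) = s + e - 1 - (j : ℕ) := by
    intro j; rw [hy]; simp
    have := j.isLt
    omega
  have x0 : (x 0 : ℤ) = s + e + 1 := by rw [hx]; simp; ring
  have x1 : (x (Fin.succ 0) : ℤ) = s + e := by rw [hx]; simp
  have x2 : ∀ j : Fin e, (x j.succ.succ : ℤ) = s + e - 1 - (j : ℕ) := by
    intro j; rw [hx]; simp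
    have := j.isLt
    omega
  simp only [Fin.prod_univ_succ (n := e + 1), Fin.prod_univ_succ (n := e), Fin.prod_Ioi_zero,
    Fin.prod_Ioi_succ, y0, y1, y2, x0, x1, x2]
  have t1 := syt_prod_tele e 2
  have t2 := syt_prod_tele e 1
  have a1 : ∀ j : Fin e, (s + e - 1 - (j : ℕ) - (s + e + 2) : ℤ) = -((j : ℕ) + (2 : ℕ) + 1 : ℤ) := by
    intro j; push_cast; ring
  have a2 : ∀ j : Fin e, (s + e - 1 - (j : ℕ) - (s + e + 1) : ℤ) = -((j : ℕ) + (2 : ℕ) : ℤ) := by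
    intro j; push_cast; ring
  have a3 : ∀ j : Fin e, (s + e - 1 - (j : ℕ) - (s + e) : ℤ) = -((j : ℕ) + (1 : ℕ) : ℤ) := by
    intro j; push_cast; ring
  have a4 : ∀ j : Fin e, (-((j : ℕ) + (1 : ℕ) + 1 : ℤ)) = -((j : ℕ) + (2 : ℕ) : ℤ) := by
    intro j; push_cast; ring
  simp only [a4] at t2
  simp only [a1, a2, a3]
  generalize (∏ j : Fin e, (-((j : ℕ) + (2 : ℕ) + 1 : ℤ))) = A at *
  generalize (∏ j : Fin e, (-((j : ℕ) + (2 : ℕ) : ℤ))) = B at *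
  generalize (∏ j : Fin e, (-((j : ℕ) + (1 : ℕ) : ℤ))) = C at *
  generalize (∏ i : Fin e, ∏ j ∈ Finset.Ioi i, (s + e - 1 - (j : ℕ) - (s + e - 1 - (i : ℕ)) : ℤ)) = D at *
  push_cast at t1 t2
  linear_combination (-B * D) * t1 + (-(2 + (e : ℤ)) * B * D) * t2

theorem syt_fact_ratio (s e : ℕ) (x y : Fin (e + 2) → ℕ)
    (hx : ∀ i, x i = s + (e + 1 - i))
    (hy : ∀ i : Fin (e + 2), y i = (if (i : ℕ) < 2 then s + 1 else s) + (e + 1 - i)) :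
    ∏ i, ((y i).factorial : ℤ) = (s + e + 2) * (s + e + 1) * ∏ i, ((x i).factorial : ℤ) := by
  have y0 : y 0 = s + e + 1 + 1 := by rw [hy]; simp; ring
  have y1 : y (Fin.succ 0) = s + e + 1 := by rw [hy]; simp; ring
  have x0 : x 0 = s + e + 1 := by rw [hx]; simp; ring
  have x1 : x (Fin.succ 0) = s + e := by rw [hx]; simp
  have y2 : ∀ j : Fin e, y j.succ.succ = x j.succ.succ := by
    intro j; rw [hy, hx]; simp
  simp only [Fin.prod_univ_succ (n := e + 1), Fin.prod_univ_succ (n := e), y0, y1, x0, x1, y2,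
    Nat.factorial_succ]
  push_cast
  ring

theorem syt_count_main (s e : ℕ) :
    2 * (s + e + 2) * (s + e + 1) *
      sytCount (e + 2) (fun i => if (i : ℕ) < 2 then s + 1 else s) =
    ((e + 2) * s + 1) * ((e + 2) * s + 1 + 1) * (e + 2) * (e + 1) *
      sytCount (e + 2) (fun _ => s) := by
  have hsx : ∑ _i : Fin (e + 2), s = (e + 2) * s := by simp
  have hsy : ∑ i : Fin (e + 2), (if (i : ℕ) < 2 then s + 1 else s) = (e + 2) * s + 1 + 1 := by
    simp [Fin.sum_univ_succ]
    ring
  rw [sytCount_eq, sytCount_eq, hsx, hsy]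
  have fx := (syt_formula ((e + 2) * s) (fun _ : Fin (e + 2) => s) (fun _ _ _ => le_rfl) hsx).2
  have fy := (syt_formula ((e + 2) * s + 1 + 1)
    (fun i : Fin (e + 2) => if (i : ℕ) < 2 then s + 1 else s) (by
      intro a b hab
      have : (a : ℕ) ≤ b := hab
      dsimp only
      split_ifs <;> omega) hsy).2
  obtain ⟨c, hc⟩ := sytM_vand (q := e + 2)
  rw [hc] at fx fy
  have r1 := syt_vand_ratio s e (sytX (fun _ => s))
    (sytX (fun i => if (i : ℕ) < 2 then s + 1 else s)) (fun i => rfl) (fun i => rfl)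
  have r2 := syt_fact_ratio s e (sytX (fun _ => s))
    (sytX (fun i => if (i : ℕ) < 2 then s + 1 else s)) (fun i => rfl) (fun i => rfl)
  have hne : ∏ i, ((sytX (fun _ : Fin (e + 2) => s) i).factorial : ℤ) ≠ 0 :=
    Finset.prod_ne_zero_iff.2 fun i _ => by exact_mod_cast Nat.factorial_ne_zero _
  rw [r2, Nat.factorial_succ, Nat.factorial_succ] at fy
  generalize Nat.card {T // SytP (fun i : Fin (e + 2) => if (i : ℕ) < 2 then s + 1 else s)
    ((e + 2) * s + 1 + 1) T} = Y at *
  generalize Nat.card {T // SytP (fun _ : Fin (e + 2) => s) ((e + 2) * s) T} = X at *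
  zify
  apply mul_right_cancel₀ hne
  push_cast at fx fy ⊢
  generalize (∏ i, ((sytX (fun _ : Fin (e + 2) => s) i).factorial : ℤ)) = P at *
  generalize (∏ i : Fin (e + 2), ∏ j ∈ Finset.Ioi i, ((sytX (fun _ : Fin (e + 2) => s) j : ℤ) -
    sytX (fun _ : Fin (e + 2) => s) i)) = V at *
  linear_combination 2 * fy - (((e : ℤ) + 2) * s + 1) * (((e : ℤ) + 2) * s + 1 + 1) * (e + 2) * (e + 1) * fx
    + (((e : ℤ) + 2) * s + 1) * (((e : ℤ) + 2) * s + 1 + 1) * (((e + 2) * s).factorial : ℤ) * c * r1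

/-- For `2 ≤ d < r`, `ε` the rectangular partition with `d` parts equal to `r - d`,
`m = d(r-d) + 1`, and `ε + p(2)` the partition obtained from `ε` by adding one box to
each of the first two rows, one has `2r(r-1) · f^{ε+p(2)} = m(m+1)d(d-1) · f^{ε}`. -/
theorem syt_count_eps_plus_col_two (r d : ℕ) (hd : 2 ≤ d) (hdr : d < r) :
    2 * r * (r - 1) * sytCount d (fun i => if (i : ℕ) < 2 then r - d + 1 else r - d) =
      (d * (r - d) + 1) * (d * (r - d) + 1 + 1) * d * (d - 1) *
        sytCount d (fun _ => r - d) := by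
  obtain ⟨e, rfl⟩ : ∃ e, d = e + 2 := ⟨d - 2, by omega⟩
  obtain ⟨s, rfl⟩ : ∃ s, r = s + (e + 2) := ⟨r - (e + 2), by omega⟩
  have := syt_count_main s e
  rw [Nat.add_sub_cancel, show s + (e + 2) - 1 = s + e + 1 by omega,
    show e + 2 - 1 = e + 1 by omega, ← add_assoc]
  exact this
end

section
/- Let r and d be integers with 0 < d < r, let ε be the rectangular partition consisting of d parts all equal to r − d, let m = d(r − d) + 1, and let ε+2 denote the partition (r − d + 2, r − d, …, r − d) with d parts, obtained from ε by adding two boxes to the first row. Then 2 r (r + 1) · f^{ε+2} = m (m + 1) d (d + 1) · f^{ε}. -/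
namespace SYTaux

variable {α : Type*} [DecidableEq α]

def Ext (R : α → α → Prop) (n : ℕ) (S : Finset α) : Type _ :=
  {g : Fin n → α // Function.Injective g ∧ (∀ x, x ∈ S ↔ ∃ i, g i = x) ∧
    ∀ i j, R (g i) (g j) → i < j}

instance (R : α → α → Prop) (n : ℕ) (S : Finset α) : Finite (Ext R n S) := by
  have : Function.Injective (fun (g : Ext R n S) (i : Fin n) =>
      (⟨g.1 i, (g.2.2.1 _).2 ⟨i, rfl⟩⟩ : {x // x ∈ S})) := by
    intro g h hgh
    apply Subtype.ext
    funext i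
    have := congrFun hgh i
    simpa using this
  exact Finite.of_injective _ this

theorem card_ext_succ (R : α → α → Prop) (n : ℕ) (S : Finset α) [DecidablePred fun x => ∀ y ∈ S, ¬ R x y] :
    Nat.card (Ext R (n+1) S) =
      ∑ x ∈ S with (∀ y ∈ S, ¬ R x y), Nat.card (Ext R n (S.erase x)) := by
  rw [← Finset.sum_coe_sort, ← Nat.card_sigma]
  symm
  let F : (Σ x : {x // x ∈ S.filter (fun x => ∀ y ∈ S, ¬ R x y)}, Ext R n (S.erase x.1)) →
      Ext R (n+1) S := fun p => ⟨Fin.snoc (α := fun _ => α) p.2.1 p.1.1, by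
    obtain ⟨⟨x, hx⟩, g, hg1, hg2, hg3⟩ := p
    rw [Finset.mem_filter] at hx
    simp only at hg2
    have hgx : ∀ i, g i ≠ x := fun i h => by
      have := (hg2 (g i)).2 ⟨i, rfl⟩
      simp [h] at this
    have hgS : ∀ i, g i ∈ S := fun i => Finset.mem_of_mem_erase ((hg2 (g i)).2 ⟨i, rfl⟩)
    refine ⟨?_, ?_, ?_⟩
    · intro i j
      refine Fin.lastCases ?_ (fun i => ?_) i <;> refine Fin.lastCases ?_ (fun j => ?_) j
      · simp
      · simpa using fun h => absurd h.symm (hgx j)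
      · simpa using fun h => absurd h (hgx i)
      · simpa using fun h => hg1 h
    · intro y
      simp only [Fin.exists_fin_succ', Fin.snoc_castSucc, Fin.snoc_last]
      rw [← hg2]
      by_cases hy : x = y
      · subst hy; simp [hx.1]
      · simp [hy, Ne.symm hy]
    · intro i j
      refine Fin.lastCases ?_ (fun i => ?_) i <;> refine Fin.lastCases ?_ (fun j => ?_) j
      · simpa using hx.2 _ hx.1
      · simpa using fun h => absurd h (hx.2 _ (hgS j))
      · simp
      · simpa using fun h => hg3 _ _ h⟩
  apply Nat.card_congr
  refine Equiv.ofBijective F ⟨?_, ?_⟩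
  · rintro ⟨⟨x, hx⟩, g, hg⟩ ⟨⟨y, hy⟩, h, hh⟩ H
    have H' : (Fin.snoc (α := fun _ => α) g x : Fin (n+1) → α) = Fin.snoc (α := fun _ => α) h y :=
      congrArg Subtype.val H
    have h1 : x = y := by simpa using congrFun H' (Fin.last n)
    subst h1
    have h2 : g = h := by
      funext i
      simpa using congrFun H' i.castSucc
    subst h2
    rfl
  · rintro ⟨g, hg1, hg2, hg3⟩
    have hl : g (Fin.last n) ∈ S.filter (fun x => ∀ y ∈ S, ¬ R x y) := by
      rw [Finset.mem_filter]
      refine ⟨(hg2 _).2 ⟨_, rfl⟩, ?_⟩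
      intro y hy hR
      obtain ⟨i, rfl⟩ := (hg2 y).1 hy
      exact absurd (hg3 _ _ hR) (not_lt.2 (Fin.le_last i))
    refine ⟨⟨⟨g (Fin.last n), hl⟩, ⟨fun i => g i.castSucc, ?_, ?_, ?_⟩⟩, ?_⟩
    · intro i j h
      exact Fin.castSucc_injective _ (hg1 h)
    · intro y
      simp only [Finset.mem_erase, hg2, Fin.exists_fin_succ']
      constructor
      · rintro ⟨h1, h2 | h2⟩
        · exact h2
        · exact absurd h2.symm h1
      · rintro ⟨i, rfl⟩
        exact ⟨fun h => absurd (hg1 h) (Fin.castSucc_lt_last i).ne, Or.inl ⟨i, rfl⟩⟩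
    · intro i j h
      exact Fin.castSucc_lt_castSucc_iff.1 (hg3 _ _ h)
    · apply Subtype.ext
      exact Fin.snoc_init_self (α := fun _ => α) g

def Rel {q : ℕ} (x y : Σ _ : Fin q, ℕ) : Prop :=
  (x.1 = y.1 ∧ x.2 < y.2) ∨ (x.1 < y.1 ∧ x.2 = y.2)

theorem sytCount_eq (q : ℕ) (l : Fin q → ℕ) :
    sytCount q l = Nat.card (Ext Rel (∑ i, l i) (sytShape q l)) := by
  unfold sytCount
  apply Nat.card_congr
  have key : ∀ T : {x // x ∈ sytShape q l} ≃ Fin (∑ i, l i), IsSYT l T ↔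
      ∀ i j, Rel (T.symm i : Σ _ : Fin q, ℕ) (T.symm j) → i < j := by
    intro T
    constructor
    · rintro ⟨h1, h2⟩ i j (⟨a, b⟩ | ⟨a, b⟩)
      · simpa using h1 _ _ a b
      · simpa using h2 _ _ a b
    · intro h
      refine ⟨fun x y a b => h _ _ (Or.inl ?_), fun x y a b => h _ _ (Or.inr ?_)⟩ <;>
      simpa using ⟨a, b⟩
  refine Equiv.ofBijective (fun T => ⟨fun i => (T.1.symm i).1, ?_, ?_, (key T.1).1 T.2⟩) ⟨?_, ?_⟩
  · exact Subtype.val_injective.comp T.1.symm.injective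
  · intro x
    constructor
    · intro hx
      exact ⟨T.1 ⟨x, hx⟩, by simp⟩
    · rintro ⟨i, rfl⟩
      exact (T.1.symm i).2
  · intro T T' h
    have h' := congrArg Subtype.val h
    apply Subtype.ext
    apply Equiv.symm_bijective.injective
    ext1 i
    exact Subtype.ext (congrFun h' i)
  · rintro ⟨g, hg1, hg2, hg3⟩
    let E : Fin (∑ i, l i) ≃ {x // x ∈ sytShape q l} :=
      Equiv.ofBijective (fun i => ⟨g i, (hg2 _).2 ⟨i, rfl⟩⟩) ⟨by
        intro i j h
        exact hg1 (congrArg Subtype.val h), by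
        rintro ⟨x, hx⟩
        obtain ⟨i, hi⟩ := (hg2 x).1 hx
        exact ⟨i, Subtype.ext hi⟩⟩
    exact ⟨⟨E.symm, (key _).2 hg3⟩, rfl⟩

theorem mem_shape {q : ℕ} {l : Fin q → ℕ} {x : Σ _ : Fin q, ℕ} :
    x ∈ sytShape q l ↔ x.2 < l x.1 := by
  simp [sytShape]

open Classical in
theorem card_rec {q : ℕ} (l : Fin q → ℕ) (hl : Antitone l) (n : ℕ) :
    Nat.card (Ext Rel (n+1) (sytShape q l)) =
      ∑ i with (0 < l i ∧ ∀ j, i < j → l j < l i),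
        Nat.card (Ext Rel n (sytShape q (Function.update l i (l i - 1)))) := by
  rw [card_ext_succ]
  symm
  refine Finset.sum_bij (fun i _ => (⟨i, l i - 1⟩ : Σ _ : Fin q, ℕ)) ?_ ?_ ?_ ?_
  · intro i hi
    simp only [Finset.mem_filter, Finset.mem_univ, true_and] at hi
    simp only [Finset.mem_filter, mem_shape]
    refine ⟨by omega, ?_⟩
    rintro ⟨a, b⟩ hy (⟨h1, h2⟩ | ⟨h1, h2⟩)
    · simp only at h1 h2 hy
      subst h1
      omega
    · simp only at h1 h2 hy
      have := hi.2 _ h1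
      omega
  · intro i _ j _ h
    exact congrArg Sigma.fst h
  · rintro ⟨i, b⟩ hx
    simp only [Finset.mem_filter, mem_shape] at hx
    obtain ⟨h1, h2⟩ := hx
    have hb : b = l i - 1 := by
      by_contra hne
      exact h2 ⟨i, b+1⟩ (by simp only; omega) (Or.inl ⟨rfl, by simp⟩)
    refine ⟨i, ?_, by rw [hb]⟩
    simp only [Finset.mem_filter, Finset.mem_univ, true_and]
    refine ⟨by omega, fun j hj => ?_⟩
    by_contra hlt
    exact h2 ⟨j, b⟩ (by simp only; omega) (Or.inr ⟨hj, rfl⟩)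
  · intro i hi
    simp only [Finset.mem_filter, Finset.mem_univ, true_and] at hi
    congr 2
    ext ⟨a, b⟩
    simp only [Finset.mem_erase, mem_shape, Function.update_apply]
    by_cases h : a = i
    · subst h
      simp
      omega
    · simp [h]

def M {q : ℕ} (L : Fin q → ℕ) : Matrix (Fin q) (Fin q) ℤ :=
  Matrix.of fun i j => ((L i).descFactorial (q - 1 - j) : ℤ)

theorem det_rec {q : ℕ} (L : Fin q → ℕ) :
    ∑ i, (L i : ℤ) * (M (Function.update L i (L i - 1))).det =
      (∑ i, (L i : ℤ) - ∑ i : Fin q, ((q - 1 - i : ℕ) : ℤ)) * (M L).det := by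
  simp only [Matrix.det_apply', Finset.mul_sum]
  rw [Finset.sum_comm]
  refine Finset.sum_congr rfl fun σ _ => ?_
  have hterm : ∀ (s : ℤ) (k : Fin q), (L k : ℤ) * (s *
      ∏ i, M (Function.update L k (L k - 1)) (σ i) i) =
      ((L k : ℤ) - ((q - 1 - (σ.symm k : Fin q) : ℕ) : ℤ)) * (s * ∏ i, M L (σ i) i) := by
    intro s k
    rw [← Finset.mul_prod_erase Finset.univ _ (Finset.mem_univ (σ.symm k)),
      ← Finset.mul_prod_erase Finset.univ (fun i => M L (σ i) i) (Finset.mem_univ (σ.symm k))]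
    have h1 : ∏ i ∈ Finset.univ.erase (σ.symm k), M (Function.update L k (L k - 1)) (σ i) i =
        ∏ i ∈ Finset.univ.erase (σ.symm k), M L (σ i) i := by
      refine Finset.prod_congr rfl fun i hi => ?_
      have : σ i ≠ k := by
        rintro rfl
        simp at hi
      simp [M, Function.update_of_ne this]
    rw [h1]
    have h2 : (L k : ℤ) * M (Function.update L k (L k - 1)) (σ (σ.symm k)) (σ.symm k) =
      ((L k : ℤ) - ((q - 1 - (σ.symm k : Fin q) : ℕ) : ℤ)) * M L (σ (σ.symm k)) (σ.symm k) := by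
      simp only [M, Matrix.of_apply, Equiv.apply_symm_apply, Function.update_self]
      generalize q - 1 - (σ.symm k : Fin q) = b
      rcases Nat.eq_zero_or_pos (L k) with h0 | h0
      · rw [h0]
        cases b <;> simp
      · obtain ⟨a, ha⟩ : ∃ a, L k = a + 1 := ⟨L k - 1, by omega⟩
        rw [ha]
        have h3 := Nat.succ_descFactorial_succ a b
        have h4 := Nat.descFactorial_succ (a+1) b
        rw [h3] at h4
        rcases le_or_gt b (a+1) with hb | hb
        · zify [hb] at h4
          simpa using h4
        · rw [Nat.add_sub_cancel, Nat.descFactorial_of_lt hb, Nat.descFactorial_of_lt (by omega : a < b)]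
          simp
    linear_combination (s * ∏ i ∈ Finset.univ.erase (σ.symm k), M L (σ i) i) * h2
  refine (Finset.sum_congr rfl fun k _ => hterm _ k).trans ?_
  rw [ ← Finset.sum_mul, Finset.sum_sub_distrib,
    Equiv.sum_comp σ.symm (fun i : Fin q => ((q - 1 - i : ℕ) : ℤ))]

def Lf {q : ℕ} (l : Fin q → ℕ) : Fin q → ℕ := fun i => l i + (q - 1 - i)

theorem frob {q : ℕ} (n : ℕ) : ∀ (l : Fin q → ℕ), Antitone l → ∑ i, l i = n →
    (Nat.card (Ext Rel n (sytShape q l)) : ℤ) * ∏ i, ((Lf l i).factorial : ℤ) =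
      n.factorial * (M (Lf l)).det := by
  classical
  induction n with
  | zero =>
    intro l hl hs
    have h0 : ∀ i, l i = 0 := by simpa using hs
    have hc : Nat.card (Ext Rel 0 (sytShape q l)) = 1 := by
      rw [Nat.card_eq_one_iff_unique]
      refine ⟨⟨fun a b => Subtype.ext (Subsingleton.elim _ _)⟩,
        ⟨⟨Fin.elim0, fun i => i.elim0, fun x => ?_, fun i => i.elim0⟩⟩⟩
      simp [mem_shape, h0]
    rw [hc, Matrix.det_of_upperTriangular]
    · simp [M, Lf, h0, Nat.descFactorial_self]
    · intro i j hij
      simp only [id] at hij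
      simp only [M, Lf, h0, Matrix.of_apply]
      have := j.2
      have := i.2
      have hij' : (j : ℕ) < i := hij
      rw [Nat.descFactorial_of_lt (by omega)]
      simp
  | succ n ih =>
    intro l hl hs
    have hrow : ∀ i : Fin q, ((if (0 < l i ∧ ∀ j, i < j → l j < l i) then
        (Nat.card (Ext Rel n (sytShape q (Function.update l i (l i - 1)))) : ℤ) else 0)) *
          ∏ i, ((Lf l i).factorial : ℤ) =
        n.factorial * ((Lf l i : ℤ) * (M (Function.update (Lf l) i (Lf l i - 1))).det) := by
      intro i
      split_ifs with h
      · have hanti : Antitone (Function.update l i (l i - 1)) := by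
          intro a b hab
          simp only [Function.update_apply]
          split_ifs with h1 h2 h2
          · rfl
          · subst h1
            have := hl hab
            omega
          · subst h2
            have := h.2 b (lt_of_le_of_ne hab (Ne.symm h1))
            omega
          · exact hl hab
        have hsum : ∑ j, Function.update l i (l i - 1) j = n := by
          rw [Finset.sum_update_of_mem (Finset.mem_univ i)]
          rw [← Finset.add_sum_erase _ _ (Finset.mem_univ i), Finset.erase_eq] at hs
          omega
        have hL : Lf (Function.update l i (l i - 1)) = Function.update (Lf l) i (Lf l i - 1) := by
          funext j
          by_cases hj : j = i
          · subst hj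
            simp [Lf]
            omega
          · simp [Lf, hj]
        have := ih _ hanti hsum
        rw [hL] at this
        have hp : ∏ j, ((Lf l j).factorial : ℤ) =
            Lf l i * ∏ j, ((Function.update (Lf l) i (Lf l i - 1) j).factorial : ℤ) := by
          rw [← Finset.mul_prod_erase _ _ (Finset.mem_univ i),
            ← Finset.mul_prod_erase Finset.univ (fun j => ((Function.update (Lf l) i (Lf l i - 1) j).factorial : ℤ)) (Finset.mem_univ i), ← mul_assoc]
          congr 1
          · rw [Function.update_self]
            have : 0 < Lf l i := by simp only [Lf]; omega
            exact_mod_cast (Nat.mul_factorial_pred this.ne').symm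
          · refine Finset.prod_congr rfl fun j hj => ?_
            rw [Function.update_of_ne (Finset.ne_of_mem_erase hj)]
        rw [hp]
        linear_combination (Lf l i : ℤ) * this
      · rw [zero_mul]
        symm
        by_cases hlast : (i : ℕ) + 1 < q
        · let k : Fin q := ⟨i + 1, hlast⟩
          have hik : i < k := by simp [k, Fin.lt_def]
          have hlk : l k = l i := by
            by_contra hne
            apply h
            have hk : l k < l i := lt_of_le_of_ne (hl hik.le) hne
            refine ⟨by omega, fun j hj => lt_of_le_of_lt (hl ?_) hk⟩
            rw [Fin.le_def]
            exact hj
          have : (M (Function.update (Lf l) i (Lf l i - 1))).det = 0 := by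
            apply Matrix.det_zero_of_row_eq hik.ne
            funext j
            simp only [M, Matrix.of_apply, Function.update_self, Function.update_of_ne hik.ne']
            congr 2
            simp only [Lf, hlk, k]
            omega
          rw [this]; simp
        · have : Lf l i = 0 := by
            have h0 : l i = 0 := by
              by_contra hne
              apply h
              refine ⟨by omega, fun j hj => ?_⟩
              have := j.2
              rw [Fin.lt_def] at hj
              omega
            simp only [Lf, h0]
            omega
          rw [this]; simp
    rw [card_rec l hl]
    push_cast
    rw [Finset.sum_filter, Finset.sum_mul, Finset.sum_congr rfl fun i _ => hrow i,
      ← Finset.mul_sum, det_rec]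
    have : (∑ i, (Lf l i : ℤ) - ∑ i : Fin q, ((q - 1 - i : ℕ) : ℤ)) = n + 1 := by
      rw [← Finset.sum_sub_distrib]
      simp only [Lf, Nat.cast_add, add_sub_cancel_right]
      exact_mod_cast hs
    rw [this, Nat.factorial_succ]
    push_cast
    ring

theorem det_M {q : ℕ} (L : Fin q → ℕ) :
    (M L).det = ∏ i : Fin q, ∏ j ∈ Finset.Ioi i, ((L j.rev : ℤ) - L i.rev) := by
  rw [← Matrix.det_vandermonde (fun i : Fin q => (L i.rev : ℤ)),
    ← Matrix.det_submatrix_equiv_self Fin.revPerm,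
    Matrix.det_eval_matrixOfPolynomials_eq_det_vandermonde (fun i : Fin q => (L i.rev : ℤ))
      (fun j => descPochhammer ℤ j) (fun j => descPochhammer_natDegree ℤ _) (fun j => monic_descPochhammer ℤ _)]
  congr 1
  ext i j
  simp only [M, Matrix.submatrix_apply, Matrix.of_apply, Fin.revPerm_apply, Fin.val_rev,
    descPochhammer_eval_eq_descFactorial]
  congr 2
  omega

theorem prod_split {k : ℕ} (v : Fin (k+1) → ℤ) :
    ∏ i, ∏ j ∈ Finset.Ioi i, (v j - v i) =
      (∏ i : Fin k, ∏ j ∈ Finset.Ioi i, (v j.castSucc - v i.castSucc)) *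
        ∏ i : Fin k, (v (Fin.last k) - v i.castSucc) := by
  rw [Fin.prod_univ_castSucc, ← Finset.prod_mul_distrib]
  have : Finset.Ioi (Fin.last k) = ∅ := by
    ext x; simp [Fin.le_last]
  rw [this, Finset.prod_empty, mul_one]
  refine Finset.prod_congr rfl fun i _ => ?_
  have h : ∀ (n : ℕ) (i : Fin n) (f : Fin n → ℤ), ∏ j ∈ Finset.Ioi i, f j = ∏ j, if i < j then f j else 1 := by
    intro n i f
    rw [← Finset.prod_filter]
    congr 1
    ext; simp
  rw [h, h, Fin.prod_univ_castSucc]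
  simp [Fin.castSucc_lt_last]

theorem prod1 (k : ℕ) : ∏ i : Fin k, ((k : ℤ) - i) = k.factorial := by
  rw [Fin.prod_univ_eq_prod_range (fun i => (k : ℤ) - i) k, ← Nat.descFactorial_self,
    Nat.descFactorial_eq_prod_range]
  push_cast
  refine Finset.prod_congr rfl fun i hi => ?_
  rw [Finset.mem_range] at hi
  rw [Nat.cast_sub hi.le]

theorem prod2 (k : ℕ) : 2 * ∏ i : Fin k, ((k : ℤ) + 2 - i) = (k+2).factorial := by
  have := prod1 (k+2)
  rw [Fin.prod_univ_castSucc, Fin.prod_univ_castSucc] at this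
  rw [← this]
  simp
  ring

end SYTaux

open SYTaux in
theorem syt_count_eps_plus_row_two (r d : ℕ) (hd : 0 < d) (hdr : d < r) :
    2 * r * (r + 1) * sytCount d (fun i => if (i : ℕ) = 0 then r - d + 2 else r - d) =
      (d * (r - d) + 1) * (d * (r - d) + 1 + 1) * d * (d + 1) *
        sytCount d (fun _ => r - d) := by
  obtain ⟨n, rfl⟩ : ∃ n, r = d + n := ⟨r - d, by omega⟩
  obtain ⟨k, rfl⟩ : ∃ k, d = k + 1 := ⟨d - 1, by omega⟩
  rw [Nat.add_sub_cancel_left]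
  set l1 : Fin (k+1) → ℕ := fun _ => n with hl1
  set l2 : Fin (k+1) → ℕ := fun i => if (i : ℕ) = 0 then n + 2 else n with hl2
  have s1 : ∑ i, l1 i = (k+1) * n := by simp [l1]
  have s2 : ∑ i, l2 i = (k+1) * n + 2 := by
    rw [Fin.sum_univ_succ]; simp [l2]; ring
  have e1 := frob _ l1 (fun a b _ => le_rfl) s1
  have e2 := frob _ l2 (fun a b hab => by
    simp only [l2]
    rw [Fin.le_def] at hab
    split_ifs <;> omega) s2
  have c1 := sytCount_eq _ l1
  have c2 := sytCount_eq _ l2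
  rw [s1] at c1
  rw [s2] at c2
  rw [← c1] at e1
  rw [← c2] at e2
  have hD : 2 * (M (Lf l2)).det = (k+2) * (k+1) * (M (Lf l1)).det := by
    rw [det_M, det_M, prod_split, prod_split]
    have a1 : ∏ i : Fin k, ((Lf l1 (Fin.last k).rev : ℤ) - Lf l1 i.castSucc.rev) = k.factorial := by
      rw [← prod1]
      refine Finset.prod_congr rfl fun i _ => ?_
      have := i.2
      simp only [Lf, l1, Fin.val_rev, Fin.val_last, Fin.val_castSucc]
      omega
    have a2 : 2 * ∏ i : Fin k, ((Lf l2 (Fin.last k).rev : ℤ) - Lf l2 i.castSucc.rev) = (k+2).factorial := by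
      rw [← prod2]
      congr 1
      refine Finset.prod_congr rfl fun i _ => ?_
      have := i.2
      simp only [Lf, l2, Fin.val_rev, Fin.val_last, Fin.val_castSucc]
      rw [if_pos (by omega), if_neg (by omega)]
      omega
    have a3 : ∀ i : Fin k, Lf l2 i.castSucc.rev = Lf l1 i.castSucc.rev := by
      intro i
      have := i.2
      simp only [Lf, l1, l2, Fin.val_rev, Fin.val_castSucc]
      rw [if_neg (by omega)]
    rw [mul_left_comm, a2, a1]
    simp only [a3]
    rw [Nat.factorial_succ, Nat.factorial_succ]
    push_cast
    ring
  have hP : ∏ i, ((Lf l2 i).factorial : ℤ) =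
      ((k : ℤ) + 1 + n) * (k + 1 + n + 1) * ∏ i, ((Lf l1 i).factorial : ℤ) := by
    rw [Fin.prod_univ_succ, Fin.prod_univ_succ]
    have b0 : Lf l2 0 = n + k + 2 := by simp [Lf, l2]; omega
    have b1 : Lf l1 0 = n + k := by simp [Lf, l1]
    have b2 : ∀ i : Fin k, Lf l2 i.succ = Lf l1 i.succ := by intro i; simp [Lf, l1, l2]
    simp only [b0, b1, b2]
    rw [Nat.factorial_succ, Nat.factorial_succ]
    push_cast
    ring
  have hpos : ∏ i, ((Lf l1 i).factorial : ℤ) ≠ 0 :=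
    Finset.prod_ne_zero_iff.2 fun i _ => by exact_mod_cast (Nat.factorial_pos _).ne'
  rw [hP, Nat.factorial_succ, Nat.factorial_succ] at e2
  zify
  apply mul_right_cancel₀ hpos
  push_cast at e1 e2 ⊢
  generalize (((k+1) * n).factorial : ℤ) = G at *
  linear_combination 2 * e2 + (((k:ℤ)+1)*n+1+1) * (((k:ℤ)+1)*n+1) * G * hD - (((k:ℤ)+1)*n+1+1) * (((k:ℤ)+1)*n+1) * (k+2)*(k+1) * e1
end

section
/- Let R be a commutative ring and let (a_n)_{n ≥ 0} and (b_n)_{n ≥ 0} be sequences in R with a_0 = b_0 = 1 satisfying ∑_{k=0}^{n} (−1)^k a_k b_{n−k} = 0 for every n ≥ 1 (equivalently, the generating series A(t) = ∑ a_n t^n and B(t) = ∑ b_n t^n satisfy A(t)·B(−t) = 1). Extend both sequences by a_n = b_n = 0 for n < 0. Then for every partition λ = (λ_1, …, λ_q) with conjugate partition λ̄ = (λ̄_1, …, λ̄_p) (where p = λ_1), the two Schur-type determinants agree: det[ a_{λ_i + j − i} ]_{1 ≤ i,j ≤ q} = det[ b_{λ̄_i + j − i} ]_{1 ≤ i,j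 ≤ p}. (This is the identity Δ_{λ̄}(c(E)) = Δ_λ(s(E)) relating Schur polynomials in Chern classes and in Segre classes; in particular, taking λ = (k), it yields Δ_{p(k)}(s(E)) = c_k(E) for the column partition p(k) consisting of k parts equal to 1.) -/
/-- Extension of a sequence `c : ℕ → R` to integer indices, by `0` for negative indices. -/
def extSeq {R : Type*} [CommRing R] (c : ℕ → R) (n : ℤ) : R :=
  if 0 ≤ n then c n.toNat else 0

theorem aux_inv {R : Type*} [CommRing R] (a b : ℕ → R)
    (ha0 : a 0 = 1) (hb0 : b 0 = 1)
    (hrel : ∀ n : ℕ, 1 ≤ n →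
      ∑ k ∈ Finset.range (n + 1), (-1 : R) ^ k * a k * b (n - k) = 0) (N x y : ℕ)
    (hx : x < N) :
    ∑ z ∈ Finset.range N, extSeq a ((x : ℤ) - (z : ℤ)) *
      ((-1) ^ (z + y) * extSeq b ((z : ℤ) - (y : ℤ))) = if x = y then 1 else 0 := by
  rcases lt_or_ge x y with h | h
  · rw [if_neg (by omega)]
    apply Finset.sum_eq_zero
    intro z _
    unfold extSeq
    by_cases h1 : z ≤ x
    · rw [if_neg (c := 0 ≤ (z : ℤ) - (y : ℤ)) (by omega)]; simp
    · rw [if_neg (c := 0 ≤ (x : ℤ) - (z : ℤ)) (by omega)]; simp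
  · obtain ⟨n, rfl⟩ := Nat.exists_eq_add_of_le h
    have key : ∑ k ∈ Finset.range (n + 1), (-1 : R) ^ n * ((-1 : R) ^ k * a k * b (n - k)) =
        ∑ z ∈ Finset.range N, extSeq a (((y + n : ℕ) : ℤ) - (z : ℤ)) *
      ((-1) ^ (z + y) * extSeq b ((z : ℤ) - (y : ℤ))) := by
      apply Finset.sum_of_injOn (fun k => y + n - k)
      · intro k hk k' hk' e
        simp at hk hk' e
        omega
      · intro k hk
        simp at hk ⊢
        omega
      · intro z hz hz'
        by_cases h1 : y ≤ z ∧ z ≤ y + n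
        · exact absurd ⟨y + n - z, by simp; omega, by simp; omega⟩ hz'
        · unfold extSeq
          by_cases h2 : z ≤ y + n
          · rw [if_neg (c := 0 ≤ (z : ℤ) - (y : ℤ)) (by omega)]; simp
          · rw [if_neg (c := 0 ≤ ((y + n : ℕ) : ℤ) - (z : ℤ)) (by omega)]; simp
      · intro k hk
        simp only [Finset.mem_range] at hk
        obtain ⟨m, rfl⟩ := Nat.exists_eq_add_of_le (show k ≤ n by omega)
        have e1 : y + (k + m) - k = y + m := by omega
        have e2 : (((y + (k + m) : ℕ) : ℤ) - ((y + m : ℕ) : ℤ)) = (k : ℤ) := by push_cast; ring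
        have e3 : (((y + m : ℕ) : ℤ) - (y : ℤ)) = (m : ℤ) := by push_cast; ring
        have e4 : k + m - k = m := by omega
        simp only [e1, e2, e3, e4, extSeq]
        simp only [Int.natCast_nonneg, if_true, Int.toNat_natCast]
        have e5 : (-1 : R) ^ (k + m) * (-1) ^ k = (-1) ^ m := by
          rw [pow_add, mul_right_comm, ← mul_pow]; simp
        have e6 : (-1 : R) ^ (y + m + y) = (-1) ^ m := by
          rw [show y + m + y = y + y + m by ring, pow_add, pow_add, ← mul_pow]; simp
        rw [e6, ← e5]; ring
    rw [← key, ← Finset.mul_sum]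
    rcases Nat.eq_zero_or_pos n with rfl | hn
    · simp [ha0, hb0]
    · rw [hrel n hn, if_neg (by omega), mul_zero]

theorem aux_conj {q : ℕ} (l : Fin q → ℕ)
    (hmono : ∀ i j : Fin q, i ≤ j → l j ≤ l i) (i : Fin q) (j : ℕ) :
    j < l i ↔ (i : ℕ) < (Finset.univ.filter fun k : Fin q => j + 1 ≤ l k).card := by
  constructor
  · intro h
    have : Finset.Iic i ⊆ Finset.univ.filter fun k : Fin q => j + 1 ≤ l k := by
      intro k hk
      have := hmono k i (by simpa using hk)
      simp; omega
    have := Finset.card_le_card this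
    simp at this
    simpa using this
  · intro h
    by_contra h'
    have : (Finset.univ.filter fun k : Fin q => j + 1 ≤ l k) ⊆ Finset.Iio i := by
      intro k hk
      simp at hk ⊢
      by_contra hc
      have := hmono i k (by simpa using hc)
      omega
    have := Finset.card_le_card this
    rw [Fin.card_Iio] at this
    omega

theorem aux_jacobi {R : Type*} [CommRing R] {m n : Type*} [Fintype m] [Fintype n]
    [DecidableEq m] [DecidableEq n] (H E : Matrix (m ⊕ n) (m ⊕ n) R) (h : H * E = 1) :
    H.det * E.toBlocks₂₂.det = H.toBlocks₁₁.det := by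
  have h1 : H * Matrix.fromBlocks 1 E.toBlocks₁₂ 0 E.toBlocks₂₂ =
      Matrix.fromBlocks H.toBlocks₁₁ 0 H.toBlocks₂₁ 1 := by
    rw [← Matrix.fromBlocks_toBlocks H, ← Matrix.fromBlocks_toBlocks E,
      Matrix.fromBlocks_multiply, ← Matrix.fromBlocks_one, Matrix.fromBlocks_inj] at h
    conv_lhs => rw [← Matrix.fromBlocks_toBlocks H]
    rw [Matrix.fromBlocks_multiply, h.2.1, h.2.2.2]
    simp
  have h2 := congrArg Matrix.det h1
  rw [Matrix.det_mul, Matrix.det_fromBlocks_zero₂₁, Matrix.det_fromBlocks_zero₁₂] at h2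
  simpa using h2

theorem aux_sign {q p : ℕ} (σ : Equiv.Perm (Fin (q + p)))
    (h1 : ∀ i j : Fin q, i < j → σ (Fin.castAdd p i) < σ (Fin.castAdd p j))
    (h2 : ∀ i j : Fin p, i < j → σ (Fin.natAdd q i) < σ (Fin.natAdd q j)) :
    Equiv.Perm.sign σ = ∏ j : Fin p, ∏ i : Fin q,
      if σ (Fin.castAdd p i) < σ (Fin.natAdd q j) then 1 else -1 := by
  rw [Equiv.Perm.sign_eq_prod_prod_Iio]
  have : ∀ j : Fin (q + p), (∏ i ∈ Finset.Iio j, if σ i < σ j then (1 : ℤˣ) else -1) =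
      ∏ i, if i < j then (if σ i < σ j then (1 : ℤˣ) else -1) else 1 := by
    intro j
    rw [← Finset.prod_filter]
    congr 1
    ext; simp
  simp_rw [this]
  rw [Fin.prod_univ_add]
  simp_rw [Fin.prod_univ_add]
  have a1 : ∀ i j : Fin q, (if Fin.castAdd p i < Fin.castAdd p j then
      (if σ (Fin.castAdd p i) < σ (Fin.castAdd p j) then (1 : ℤˣ) else -1) else 1) = 1 := by
    intro i j
    split_ifs with u v
    · rfl
    · exact absurd (h1 i j u) v
    · rfl
  have a2 : ∀ i j : Fin p, (if Fin.natAdd q i < Fin.natAdd q j then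
      (if σ (Fin.natAdd q i) < σ (Fin.natAdd q j) then (1 : ℤˣ) else -1) else 1) = 1 := by
    intro i j
    split_ifs with u v
    · rfl
    · exact absurd (h2 i j (by simpa using u)) v
    · rfl
  have a3 : ∀ (i : Fin q) (j : Fin p), Fin.castAdd p i < Fin.natAdd q j := by
    intro i j
    rw [Fin.lt_def]; simp; omega
  have a4 : ∀ (i : Fin q) (j : Fin p), ¬ Fin.natAdd q j < Fin.castAdd p i := by
    intro i j
    exact not_lt.mpr (a3 i j).le
  simp only [a1, a2, a3, a4, if_true, if_false, Finset.prod_const_one, one_mul, mul_one]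

/-- **Schur determinant duality (Jacobi–Trudi / dual Jacobi–Trudi).**
Let `(a_n)` and `(b_n)` be sequences in a commutative ring `R` with `a_0 = b_0 = 1` and
`∑_{k=0}^n (-1)^k a_k b_{n-k} = 0` for all `n ≥ 1` (i.e. `A(t) B(-t) = 1`), both extended
by `0` to negative indices.  Then for any partition `λ = (λ_1 ≥ ⋯ ≥ λ_q ≥ 1)` (here
zero-indexed: `l i = λ_{i+1}`) with conjugate partition `λ̄` of length `p = λ_1`
(`λ̄_i = #{ j : λ_j ≥ i }`, here zero-indexed as `conj i = #{ j : l j ≥ i + 1 }`), the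
Schur-type determinants agree:
`det [a_{λ_i + j - i}]_{1 ≤ i,j ≤ q} = det [b_{λ̄_i + j - i}]_{1 ≤ i,j ≤ p}`. -/
theorem schur_det_duality (R : Type*) [CommRing R] (a b : ℕ → R)
    (ha0 : a 0 = 1) (hb0 : b 0 = 1)
    (hrel : ∀ n : ℕ, 1 ≤ n →
      ∑ k ∈ Finset.range (n + 1), (-1 : R) ^ k * a k * b (n - k) = 0)
    (q : ℕ) (hq : 0 < q) (l : Fin q → ℕ)
    (hmono : ∀ i j : Fin q, i ≤ j → l j ≤ l i) (hpos : ∀ i, 1 ≤ l i) :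
    Matrix.det (fun i j : Fin q => extSeq a ((l i : ℤ) + (j : ℕ) - (i : ℕ))) =
      Matrix.det (fun i j : Fin (l ⟨0, hq⟩) =>
        extSeq b
          (((Finset.univ.filter fun k : Fin q => (i : ℕ) + 1 ≤ l k).card : ℤ) +
            (j : ℕ) - (i : ℕ))) := by
  generalize hp : l ⟨0, hq⟩ = p
  set c : ℕ → ℕ := fun j => (Finset.univ.filter fun k : Fin q => j + 1 ≤ l k).card with hc
  have hcj : ∀ (i : Fin q) (j : ℕ), j < l i ↔ (i : ℕ) < c j := fun i j => aux_conj l hmono i j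
  have hcq : ∀ j, c j ≤ q := fun j => by
    have := Finset.card_le_univ (Finset.univ.filter fun k : Fin q => j + 1 ≤ l k)
    rw [Fintype.card_fin] at this
    exact this
  have hcm : ∀ i j, i ≤ j → c j ≤ c i := fun i j hij =>
    Finset.card_le_card (fun k hk => by simp at hk ⊢; omega)
  have hlp : ∀ i, l i ≤ p := fun i => hp ▸ hmono ⟨0, hq⟩ i (Fin.mk_le_of_le_val (Nat.zero_le _))
  have hcpos : ∀ j : Fin p, 1 ≤ c j := fun j => by
    have := (hcj ⟨0, hq⟩ j).1 (by rw [hp]; exact j.2)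
    exact this
  let X : Fin q → Fin (q + p) := fun i => ⟨l i.rev + i, by have := hlp i.rev; omega⟩
  let Z : Fin p → Fin (q + p) := fun j => ⟨q + j - c j, by omega⟩
  have hX : ∀ i j : Fin q, i < j → X i < X j := by
    intro i j hij
    have := hmono j.rev i.rev (Fin.rev_le_rev.mpr hij.le)
    simp only [X, Fin.lt_def] at hij ⊢
    omega
  have hZ : ∀ i j : Fin p, i < j → Z i < Z j := by
    intro i j hij
    have h1 := hcm i j hij.le
    have h2 := hcq i
    simp only [Z, Fin.lt_def] at hij ⊢
    omega
  have hXZ : ∀ (i : Fin q) (j : Fin p), (X i < Z j ↔ ¬ (j : ℕ) < l i.rev) ∧ X i ≠ Z j := by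
    intro i j
    have h1 := hcj i.rev j
    have h2 := hcq j
    have h3 := Fin.val_rev i
    simp only [X, Z, Fin.lt_def, ne_eq, Fin.ext_iff]
    have := i.2
    omega
  have hinj : Function.Injective (Fin.addCases X Z : Fin (q + p) → Fin (q + p)) := by
    intro u v
    refine Fin.addCases (fun i => ?_) (fun i => ?_) u <;>
    refine Fin.addCases (fun j => ?_) (fun j => ?_) v <;>
    simp only [Fin.addCases_left, Fin.addCases_right] <;> intro h
    · exact congrArg _ ((show StrictMono X from fun i j => hX i j).injective h)
    · exact absurd h (hXZ i j).2
    · exact absurd h.symm (hXZ j i).2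
    · exact congrArg _ ((show StrictMono Z from fun i j => hZ i j).injective h)
  let σ : Equiv.Perm (Fin (q + p)) := Equiv.ofBijective _ (Finite.injective_iff_bijective.1 hinj)
  have hσX : ∀ i, σ (Fin.castAdd p i) = X i := fun i => by simp [σ]
  have hσZ : ∀ j, σ (Fin.natAdd q j) = Z j := fun j => by simp [σ]
  have hsign : Equiv.Perm.sign σ = ∏ j : Fin p, (-1 : ℤˣ) ^ c j := by
    rw [aux_sign σ (by simpa only [hσX] using hX) (by simpa only [hσZ] using hZ)]
    refine Finset.prod_congr rfl fun j _ => ?_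
    simp only [hσX, hσZ, (hXZ _ _).1, ite_not]
    rw [show (∏ i : Fin q, if (j : ℕ) < l i.rev then (-1 : ℤˣ) else 1) = _ from
      Equiv.prod_comp Fin.revPerm (fun i => if (j : ℕ) < l i then (-1 : ℤˣ) else 1)]
    rw [← Finset.prod_filter, Finset.prod_const]
    rfl
  let H : Matrix (Fin (q + p)) (Fin (q + p)) R :=
    Matrix.of fun x y => extSeq a (((x : ℕ) : ℤ) - ((y : ℕ) : ℤ))
  let E : Matrix (Fin (q + p)) (Fin (q + p)) R :=
    Matrix.of fun x y => (-1) ^ ((x : ℕ) + y) * extSeq b (((x : ℕ) : ℤ) - ((y : ℕ) : ℤ))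
  have hHE : H * E = 1 := by
    ext x y
    rw [Matrix.mul_apply, Matrix.one_apply]
    simp only [H, E, Matrix.of_apply]
    rw [Fin.sum_univ_eq_sum_range (fun z => extSeq a (((x : ℕ) : ℤ) - (z : ℤ)) *
      ((-1) ^ (z + (y : ℕ)) * extSeq b ((z : ℤ) - ((y : ℕ) : ℤ)))) (q + p),
      aux_inv a b ha0 hb0 hrel _ _ _ x.2]
    simp [Fin.ext_iff]
  have hH : H.det = 1 := by
    rw [Matrix.det_of_isLowerTriangular]
    · simp [H, extSeq, ha0]
    · intro i j hij
      have : i < j := hij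
      simp only [H, extSeq, Matrix.of_apply]
      rw [if_neg]
      rw [Fin.lt_def] at this; omega
  let τ : Fin q ⊕ Fin p ≃ Fin (q + p) := finSumFinEquiv
  have hJ := aux_jacobi ((H.submatrix σ id).submatrix τ τ) ((E.submatrix id σ).submatrix τ τ) (by
    rw [Matrix.submatrix_mul_equiv, Matrix.submatrix_mul _ _ _ id _ Function.bijective_id |>.symm, hHE]
    simp)
  rw [Matrix.det_submatrix_equiv_self, Matrix.det_permute, hH, mul_one, hsign] at hJ
  have hA : Matrix.det (fun i j : Fin q => extSeq a ((l i : ℤ) + (j : ℕ) - (i : ℕ))) =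
      ((H.submatrix σ id).submatrix τ τ).toBlocks₁₁.det := by
    refine (Matrix.det_submatrix_equiv_self Fin.revPerm (Matrix.of
      fun i j : Fin q => extSeq a ((l i : ℤ) + (j : ℕ) - (i : ℕ)))).symm.trans ?_
    congr 1
    ext i j
    simp only [Matrix.submatrix_apply, Matrix.toBlocks₁₁, Matrix.of_apply, τ, H,
      finSumFinEquiv_apply_left, hσX, X, id, Fin.revPerm_apply, Fin.val_castAdd]
    congr 1
    have h3 := Fin.val_rev i
    have h4 := Fin.val_rev j
    have := i.2
    have := j.2
    omega
  have hD : ((E.submatrix id σ).submatrix τ τ).toBlocks₂₂.det =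
      (∏ j : Fin p, (-1 : R) ^ c j) *
      Matrix.det (fun i j : Fin p => extSeq b ((c i : ℤ) + (j : ℕ) - (i : ℕ))) := by
    have e : ((E.submatrix id σ).submatrix τ τ).toBlocks₂₂ =
      Matrix.of (fun k j : Fin p => (-1 : R) ^ ((k : ℕ)) * (Matrix.of (fun k j : Fin p =>
        (-1 : R) ^ ((j : ℕ) + c j) *
        (Matrix.transpose (Matrix.of fun i j : Fin p =>
          extSeq b ((c i : ℤ) + (j : ℕ) - (i : ℕ)))) k j)) k j) := by
      ext k j
      have h2 := hcq j
      simp only [Matrix.submatrix_apply, Matrix.toBlocks₂₂, Matrix.of_apply, τ, E,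
        finSumFinEquiv_apply_right, hσZ, Z, id, Fin.val_natAdd, Matrix.transpose_apply]
      rw [← mul_assoc, ← pow_add]
      congr 1
      · have : q + (k : ℕ) + (q + j - c j) + 2 * c j = 2 * q + (k + (j + c j)) := by omega
        have h5 := congrArg (fun n => (-1 : R) ^ n) this
        simpa [pow_add, pow_mul] using h5
      · congr 1
        omega
    rw [e, Matrix.det_mul_column, Matrix.det_mul_row, Matrix.det_transpose, ← mul_assoc,
      ← Finset.prod_mul_distrib]
    refine congrArg (· * _) ?_
    refine Finset.prod_congr rfl fun j _ => ?_
    rw [← pow_add, ← add_assoc, pow_add, ← two_mul, pow_mul]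
    simp
  rw [hA, ← hJ, hD, ← mul_assoc]
  have : ((((∏ j : Fin p, (-1 : ℤˣ) ^ c j : ℤˣ) : ℤ) : R)) * ∏ j : Fin p, (-1 : R) ^ c j = 1 := by
    push_cast
    rw [← Finset.prod_mul_distrib]
    refine Finset.prod_eq_one fun j _ => ?_
    rw [← mul_pow]; simp
  rw [this, one_mul]
end
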